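/- arXiv:2509.06435 — 7 statements merged into one kernel-verified Lean document; each statement's English description precedes it below -/
import Mathlib

section
/- Suppose W isolates a size-k common independent set I_k of matroids M₁ and M₂, and let s ∈ S. Then there exists a size-k common independent set I with s ∈ I Δ I_k if and only if the exchange graph 𝓔(M₁,M₂,I_k) contains a directed cycle through s. -/
/-- `I` is a common independent set of the matroids `M₁` and `M₂`. -/
def CommonIndep {α : Type*} (M₁ M₂ : Matroid α) (I : Finset α) : Prop :=
  M₁.Indep ↑I ∧ M₂.Indep ↑I

/-- The weight `W(I) = ∑_{s ∈ I} W(s)` of a set. -/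
def setW {α : Type*} (W : α → ℤ) (I : Finset α) : ℤ := ∑ x ∈ I, W x

/-- Adjacency in the exchange graph `𝓔(M₁,M₂,I)`: for `y ∈ I` and `x ∉ I` there is an
edge `(y,x)` iff `(I \ {y}) ∪ {x} ∈ 𝓘₁`, and an edge `(x,y)` iff `(I \ {y}) ∪ {x} ∈ 𝓘₂`. -/
def ExchAdj {α : Type*} [DecidableEq α] (M₁ M₂ : Matroid α) (I : Finset α) (u v : α) : Prop :=
  (u ∈ I ∧ v ∉ I ∧ M₁.Indep ↑(insert v (I.erase u))) ∨
  (u ∉ I ∧ v ∈ I ∧ M₂.Indep ↑(insert u (I.erase v)))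

/-- The vertex weights of the exchange graph: `l(s) = -W(s)` if `s ∈ I`, else `l(s) = W(s)`. -/
def exchWt {α : Type*} [DecidableEq α] (W : α → ℤ) (I : Finset α) (s : α) : ℤ :=
  if s ∈ I then -W s else W s

/-- The weight of a walk/path/cycle given by the vertex list `l`: the sum of the vertex
weights over `l`. -/
def listW {α : Type*} [DecidableEq α] (W : α → ℤ) (I : Finset α) (l : List α) : ℤ :=
  (l.map (exchWt W I)).sum

/-- `l` is (the vertex list of) a simple directed cycle for the adjacency relation `Adj`. -/
def IsCycle {α : Type*} (Adj : α → α → Prop) (l : List α) : Prop :=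
  ∃ h : l ≠ [], l.Chain' Adj ∧ Adj (l.getLast h) (l.head h) ∧ l.Nodup

/-- `x ∈ X₁`, i.e. `x ∉ I` and `I ∪ {x} ∈ 𝓘₁` (and analogously for `X₂` with `M₂`). -/
def memX {α : Type*} [DecidableEq α] (M : Matroid α) (I : Finset α) (x : α) : Prop :=
  x ∉ I ∧ M.Indep ↑(insert x I)

/-- `l` is (the vertex list of) a simple directed path from `X₁` to `X₂` in the exchange
graph `𝓔(M₁,M₂,I)`. -/
def IsXPath {α : Type*} [DecidableEq α] (M₁ M₂ : Matroid α) (I : Finset α) (l : List α) : Prop :=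
  ∃ h : l ≠ [], l.Chain' (ExchAdj M₁ M₂ I) ∧ l.Nodup ∧
    memX M₁ I (l.head h) ∧ memX M₂ I (l.getLast h)

/-- `I` is a minimum-weight common independent set of size `k` (not necessarily unique). -/
def IsMinWtOfSize {α : Type*} (M₁ M₂ : Matroid α) (W : α → ℤ) (k : ℕ) (I : Finset α) : Prop :=
  CommonIndep M₁ M₂ I ∧ I.card = k ∧
    ∀ J : Finset α, CommonIndep M₁ M₂ J → J.card = k → setW W I ≤ setW W J

/-- `W` isolates the size-`k` common independent set `I`: `I` is the unique minimum-weight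
common independent set of size `k`. -/
def Isolates {α : Type*} (M₁ M₂ : Matroid α) (W : α → ℤ) (k : ℕ) (I : Finset α) : Prop :=
  CommonIndep M₁ M₂ I ∧ I.card = k ∧
    ∀ J : Finset α, CommonIndep M₁ M₂ J → J.card = k → J ≠ I → setW W I < setW W J

/-!
Let `I` be the isolated set and `J` a common independent set of the same size. Comparing ranks,
Hall's condition holds for the `M₁`-exchanges between `J \ I` and `I \ J`, and for the
`M₂`-exchanges. Two perfect matchings, one for each matroid, together form a permutation of `J Δ I`
along edges of the exchange graph, so every element of `J Δ I` lies on a directed cycle.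

Conversely, a cycle `C` yields the candidate `I Δ C`, of the same size as `I`. Suppose some vertex
weights sum to zero over `C` and to a positive number over every cycle on a proper subset of `C`.
Then the partial sums along `C` define a potential, and since a chord from `u` to `v` closes up a
shorter cycle, `v` has smaller potential than the successor of `u` on `C`. The exchanges along `C`
are therefore triangular, and can all be performed at once in each matroid, so `I Δ C` is common
independent. Lowering the weight of one vertex `v` of `C` by the weight of `C` makes the sum over
`C` zero and affects only the cycles through `v`. If `C` is an inclusion-minimal cycle of
nonpositive weight, this contradicts the minimality of `W(I)`; so all cycles have positive weight,
and the same argument applies, with `v = s`, to an inclusion-minimal cycle through `s`.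
-/

open Equiv

section MatroidExchange

variable {α : Type*} {M : Matroid α}

theorem indep_sdiff_union_image_of_triangular {ι : Type*} [LinearOrder ι] {I : Set α}
    (hI : M.Indep I) {ν : α → α} {q : α → ι} {Y : Finset α} (hν : ∀ y ∈ Y, ν y ∉ I)
    (hexch : ∀ y ∈ Y, M.Indep (insert (ν y) (I \ {y})))
    (htri : ∀ y ∈ Y, ∀ y' ∈ Y, y' ≠ y → M.Indep (insert (ν y') (I \ {y})) → q y' < q y) :
    M.Indep (I \ Y ∪ ν '' Y) := by
  classical
  -- For `y` with `q y` minimal, `M.closure (I \ {y})` contains every `ν y'` except `ν y`.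
  induction Y using Finset.induction_on_min_value q with
  | empty => simpa using hI
  | insert y Y hyY hmin ih =>
    simp only [Finset.forall_mem_insert] at hν hexch htri
    rw [Finset.coe_insert]
    have hK : M.Indep (I \ insert y ↑Y ∪ ν '' Y) :=
      (ih hν.2 hexch.2 fun a ha b hb ↦ (htri.2 a ha).2 b hb).subset (by grind)
    have hIy : M.Indep (I \ {y}) := hI.subset Set.sdiff_subset
    have hνy : ν y ∈ M.E \ M.closure (I \ {y}) :=
      (hIy.insert_indep_iff_of_notMem fun h ↦ hν.1 h.1).1 hexch.1
    have hν_closure : ∀ y' ∈ Y, ν y' ∈ M.closure (I \ {y}) := by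
      intro y' hy'
      by_contra hcl
      have hne : y' ≠ y := ne_of_mem_of_not_mem hy' hyY
      have hground : ν y' ∈ M.E := (hexch.2 y' hy').subset_ground (Set.mem_insert _ _)
      have hindep := (hIy.insert_indep_iff).2 (Or.inl ⟨hground, hcl⟩)
      exact (htri.1.2 y' hy' hne hindep).not_ge (hmin y' hy')
    have hK_closure : I \ insert y ↑Y ∪ ν '' Y ⊆ M.closure (I \ {y}) := by
      refine Set.union_subset ?_ (Set.image_subset_iff.2 hν_closure)
      exact (Set.sdiff_subset_sdiff_right (by simp)).trans
        (M.subset_closure _ hIy.subset_ground)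
    have hindep : M.Indep (insert (ν y) (I \ insert y ↑Y ∪ ν '' Y)) :=
      hK.insert_indep_iff.2 <| Or.inl
        ⟨hνy.1, fun h ↦ hνy.2 (M.closure_subset_closure_of_subset_closure hK_closure h)⟩
    exact hindep.subset (by grind)

theorem mem_closure_of_forall_not_indep_exchange {I K : Set α} {x : α} (hI : M.Indep I)
    (hxI : x ∉ I) (hx : x ∈ M.closure I) (hK : ∀ y ∈ I \ K, ¬ M.Indep (insert x (I \ {y}))) :
    x ∈ M.closure K := by
  have hsub : M.fundCircuit x I \ {x} ⊆ K := by
    rintro y ⟨hy, hyx : y ≠ x⟩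
    have hyI : y ∈ I := (M.fundCircuit_subset_insert x I hy).resolve_left hyx
    by_contra hyK
    refine hK y ⟨hyI, hyK⟩ ?_
    rw [Set.insert_sdiff_singleton_comm hyx.symm]
    exact (hI.mem_fundCircuit_iff hx hxI).1 hy
  exact M.closure_subset_closure hsub <|
    (hI.fundCircuit_isCircuit hx hxI).mem_closure_sdiff_singleton_of_mem
      (M.mem_fundCircuit x I)

variable [DecidableEq α] {I J : Finset α}

open scoped Classical in
theorem card_le_card_exchange_neighbors (hI : M.Indep I) (hJ : M.Indep J)
    (hcard : J.card ≤ I.card) {A : Finset α} (hA : A ⊆ J \ I) :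
    A.card ≤ {y ∈ I \ J | ∃ x ∈ A, M.Indep (insert x (↑I \ {y}))}.card := by
  set N := {y ∈ I \ J | ∃ x ∈ A, M.Indep (insert x (↑I \ {y}))}
  by_cases hall : I \ J ⊆ N
  · calc A.card ≤ (J \ I).card := Finset.card_le_card hA
      _ ≤ (I \ J).card := Finset.card_sdiff_le_card_sdiff_iff.2 hcard
      _ ≤ N.card := Finset.card_le_card hall
  obtain ⟨y₀, hy₀, hy₀N⟩ := Finset.not_subset.1 hall
  have hnot : ∀ y ∈ I \ J, y ∉ N → ∀ x ∈ A, ¬ M.Indep (insert x (↑I \ {y})) := by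
    intro y hy hyN x hx hind
    exact hyN (Finset.mem_filter.2 ⟨hy, x, hx, hind⟩)
  have hA_closure : ∀ x ∈ A, x ∈ M.closure ↑(I ∩ J ∪ N) := by
    intro x hx
    have hxJI := Finset.mem_sdiff.1 (hA hx)
    have hx_closure : x ∈ M.closure I := by
      by_contra hcl
      have hindep : M.Indep (insert x I) :=
        hI.insert_indep_iff.2 (Or.inl ⟨hJ.subset_ground hxJI.1, hcl⟩)
      exact hnot y₀ hy₀ hy₀N x hx
        (hindep.subset (Set.insert_subset_insert Set.sdiff_subset))
    refine mem_closure_of_forall_not_indep_exchange hI hxJI.2 hx_closure fun y hy ↦ ?_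
    exact hnot y (by grind) (by grind) x hx
  have hsub : (↑(I ∩ J ∪ A) : Set α) ⊆ M.closure ↑(I ∩ J ∪ N) := by
    intro x hx
    rcases Finset.mem_union.1 hx with hx | hx
    · exact M.subset_closure _ (hI.subset_ground.trans' (by grind)) (by grind)
    · exact hA_closure x hx
  have hle : (I ∩ J ∪ A).card ≤ (I ∩ J ∪ N).card := by
    have hindep : M.Indep ↑(I ∩ J ∪ A) := hJ.subset (by grind)
    have := (hindep.encard_le_eRk_of_subset hsub).trans
      ((M.eRk_closure_eq _).trans_le (M.eRk_le_encard _))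
    simpa only [Set.encard_coe_eq_coe_finsetCard, Nat.cast_le] using this
  rw [Finset.card_union_of_disjoint (by grind [Finset.disjoint_left]),
    Finset.card_union_of_disjoint (by grind [Finset.disjoint_left])] at hle
  omega

theorem exists_equiv_exchange (hI : M.Indep I) (hJ : M.Indep J) (hcard : I.card = J.card) :
    ∃ f : ↥(J \ I) ≃ ↥(I \ J), ∀ x : ↥(J \ I), M.Indep (insert (x : α) (↑I \ {↑(f x)})) := by
  classical
  let t : ↥(J \ I) → Finset α := fun x ↦ {y ∈ I \ J | M.Indep (insert ↑x (↑I \ {y}))}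
  have hall : ∀ A : Finset ↥(J \ I), A.card ≤ (A.biUnion t).card := by
    intro A
    have hA : A.map (.subtype _) ⊆ J \ I := Finset.map_subtype_subset A
    have hbiUnion : A.biUnion t =
        {y ∈ I \ J | ∃ x ∈ A.map (.subtype _), M.Indep (insert x (↑I \ {y}))} := by
      ext y
      simp only [t, Finset.mem_biUnion, Finset.mem_filter, Finset.mem_map,
        Function.Embedding.coe_subtype]
      grind
    simpa [hbiUnion] using card_le_card_exchange_neighbors hI hJ hcard.ge hA
  obtain ⟨f, hf_inj, hf⟩ := (Finset.all_card_le_biUnion_card_iff_exists_injective t).1 hall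
  let g : ↥(J \ I) → ↥(I \ J) := fun x ↦ ⟨f x, (Finset.mem_filter.1 (hf x)).1⟩
  have hg : Function.Bijective g := by
    refine (Fintype.bijective_iff_injective_and_card g).2
      ⟨fun x y hxy ↦ hf_inj (congrArg Subtype.val hxy), ?_⟩
    simpa using Finset.card_sdiff_comm hcard.symm
  exact ⟨.ofBijective g hg, fun x ↦ (Finset.mem_filter.1 (hf x)).2⟩

end MatroidExchange

section Cycles

variable {α β : Type*} {Adj : α → α → Prop} {l : List α}

theorem isCycle_iterate {g : α → α} {x : α} {m : ℕ}
    (hinj : Set.InjOn (g^[·] x) (Set.Iio (m + 1)))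
    (hadj : ∀ i < m, Adj (g^[i] x) (g^[i + 1] x)) (hclose : Adj (g^[m] x) x) :
    IsCycle Adj (List.iterate g x (m + 1)) := by
  have hne : List.iterate g x (m + 1) ≠ [] := List.cons_ne_nil _ _
  refine ⟨hne, ?_, ?_, ?_⟩
  · refine List.isChain_iff_getElem.2 fun i hi ↦ ?_
    simpa only [List.getElem_iterate] using hadj i (by simpa using hi)
  · rw [List.getLast_eq_getElem, List.head_eq_getElem, List.getElem_iterate, List.getElem_iterate]
    simpa using hclose
  · rw [← List.range_map_iterate, List.nodup_map_iff_inj_on List.nodup_range]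
    simpa [Set.InjOn] using hinj

theorem IsCycle.map {g : β → α} (hg : Function.Injective g) {l : List β}
    (hl : IsCycle (fun a b ↦ Adj (g a) (g b)) l) : IsCycle Adj (l.map g) := by
  obtain ⟨hne, hchain, hclose, hnodup⟩ := hl
  exact ⟨by simpa using hne, (List.isChain_map g).2 hchain, by simpa using hclose,
    hnodup.map hg⟩

theorem exists_isCycle_of_injective [Finite α] {e : α → α} (he : Function.Injective e)
    (hadj : ∀ v, Adj v (e v)) (v : α) : ∃ l, IsCycle Adj l ∧ v ∈ l := by
  have hpos := Function.minimalPeriod_pos_of_mem_periodicPts (he.mem_periodicPts v)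
  obtain ⟨m, hm⟩ := Nat.exists_eq_add_of_lt hpos
  rw [zero_add] at hm
  refine ⟨List.iterate e v (m + 1), isCycle_iterate ?_ (fun i _ ↦ ?_) ?_, by simp [List.iterate]⟩
  · exact hm ▸ Function.iterate_injOn_Iio_minimalPeriod
  · simpa only [Function.iterate_succ_apply'] using hadj (e^[i] v)
  · have := hadj (e^[m] v)
    rwa [← Function.iterate_succ_apply' e, Nat.succ_eq_add_one, ← hm,
      Function.iterate_minimalPeriod] at this

theorem add_sum_map_iterate {G : Type*} [AddMonoid G] {g : α → α} {p w : α → G} {x : α} {m : ℕ}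
    (hp : ∀ i < m, p (g^[i + 1] x) = p (g^[i] x) + w (g^[i] x)) :
    p x + ((List.iterate g x m).map w).sum = p (g^[m] x) := by
  induction m with
  | zero => simp
  | succ m ih =>
    rw [List.iterate_add, hp m m.lt_succ_self, ← ih fun i hi ↦ hp i (hi.trans m.lt_succ_self)]
    simp [add_assoc]

variable [DecidableEq α]

theorem IsCycle.adj_formPerm (hl : IsCycle Adj l) {v : α} (hv : v ∈ l) :
    Adj v (l.formPerm v) := by
  obtain ⟨hne, hchain, hclose, hnodup⟩ := hl
  obtain ⟨i, hi, rfl⟩ := List.getElem_of_mem hv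
  rw [List.formPerm_apply_getElem l hnodup]
  by_cases hlast : i + 1 < l.length
  · simpa only [Nat.mod_eq_of_lt hlast] using List.isChain_iff_getElem.1 hchain i hlast
  · obtain rfl : i = l.length - 1 := by omega
    rw [List.getLast_eq_getElem, List.head_eq_getElem] at hclose
    simpa [Nat.sub_add_cancel (List.length_pos_of_ne_nil hne)] using hclose

theorem IsCycle.isCycleOn_formPerm (hl : IsCycle Adj l) :
    l.formPerm.IsCycleOn (l.toFinset : Set α) := by
  obtain ⟨-, -, -, hnodup⟩ := hl
  simpa using hnodup.isCycleOn_formPerm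

theorem exists_potential_of_sum_eq_zero {G : Type*} [AddMonoid G] (hl : l.Nodup) {w : α → G}
    (hw : (l.map w).sum = 0) : ∃ p : α → G, ∀ v ∈ l, p (l.formPerm v) = p v + w v := by
  have hsum_succ : ∀ i (hi : i < l.length),
      ((l.take (i + 1)).map w).sum = ((l.take i).map w).sum + w l[i] := by
    intro i hi
    rw [List.map_take, List.sum_take_succ _ _ (by simpa using hi), List.getElem_map, List.map_take]
  refine ⟨fun v ↦ ((l.take (l.idxOf v)).map w).sum, fun v hv ↦ ?_⟩
  obtain ⟨i, hi, rfl⟩ := List.getElem_of_mem hv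
  simp only [List.formPerm_apply_getElem l hl, hl.idxOf_getElem, ← hsum_succ]
  by_cases hlast : i + 1 < l.length
  · rw [Nat.mod_eq_of_lt hlast]
  · have hlen : i + 1 = l.length := by omega
    simp [hlen, hw]

theorem IsCycle.exists_isCycle_iterate_of_chord (hl : IsCycle Adj l) {u v : α} (hu : u ∈ l)
    (hv : v ∈ l) (huv : Adj u v) (hne : v ≠ l.formPerm u) :
    ∃ m, l.formPerm^[m] v = u ∧ IsCycle Adj (List.iterate l.formPerm v (m + 1)) ∧
      (List.iterate l.formPerm v (m + 1)).toFinset ⊂ l.toFinset := by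
  set σ := l.formPerm
  have hσ : σ.IsCycleOn (l.toFinset : Set α) := hl.isCycleOn_formPerm
  rw [← List.mem_toFinset] at hu hv
  have hmem : ∀ i, σ^[i] v ∈ l.toFinset := fun i ↦ (hσ.1.mapsTo.iterate i) hv
  have hinj : Set.InjOn (σ^[·] v) (Set.Iio l.toFinset.card) := by
    intro i hi j hj hij
    simp only [Perm.iterate_eq_pow] at hij
    exact ((hσ.pow_apply_eq_pow_apply hv).1 hij).eq_of_lt_of_lt hi hj
  obtain ⟨m, hm, hmu⟩ := hσ.exists_pow_eq hv hu
  rw [← Perm.iterate_eq_pow] at hmu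
  have hm_lt : m + 1 < l.toFinset.card := by
    refine lt_of_le_of_ne hm fun h ↦ hne ?_
    rw [← hmu, ← Function.iterate_succ_apply' σ, Nat.succ_eq_add_one, h, Perm.iterate_eq_pow,
      hσ.pow_card_apply hv]
  refine ⟨m, hmu, ?_, ?_⟩
  · refine isCycle_iterate (hinj.mono (Set.Iio_subset_Iio hm)) (fun i _ ↦ ?_) (hmu ▸ huv)
    simpa only [Function.iterate_succ_apply'] using hl.adj_formPerm (List.mem_toFinset.1 (hmem i))
  · refine Finset.ssubset_iff_of_subset (fun x hx ↦ ?_) |>.2 ⟨σ^[m + 1] v, hmem _, ?_⟩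
    · obtain ⟨i, -, rfl⟩ := List.mem_iterate.1 (List.mem_toFinset.1 hx)
      exact hmem i
    · rw [List.mem_toFinset, List.mem_iterate]
      rintro ⟨i, hi, heq⟩
      exact hi.ne' (hinj hm_lt (hi.trans hm_lt) heq)

theorem IsCycle.potential_lt_of_chord {R : Type*} [AddMonoid R] [Preorder R] [AddLeftStrictMono R]
    (hl : IsCycle Adj l) {p w : α → R} (hp : ∀ v ∈ l, p (l.formPerm v) = p v + w v)
    (hpos : ∀ l', IsCycle Adj l' → l'.toFinset ⊂ l.toFinset → 0 < (l'.map w).sum)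
    {u v : α} (hu : u ∈ l) (hv : v ∈ l) (huv : Adj u v) (hne : v ≠ l.formPerm u) :
    p v < p (l.formPerm u) := by
  obtain ⟨m, rfl, hcycle, hssub⟩ := hl.exists_isCycle_iterate_of_chord hu hv huv hne
  have hmem : ∀ i < m + 1, l.formPerm^[i] v ∈ l := fun i hi ↦
    List.mem_toFinset.1 (hssub.1 (List.mem_toFinset.2 (List.mem_iterate.2 ⟨i, hi, rfl⟩)))
  have hsum : p v + ((List.iterate l.formPerm v (m + 1)).map w).sum = p (l.formPerm^[m + 1] v) := by
    refine add_sum_map_iterate fun i hi ↦ ?_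
    rw [Function.iterate_succ_apply', hp _ (hmem i hi)]
  rw [← Function.iterate_succ_apply' l.formPerm, Nat.succ_eq_add_one, ← hsum]
  exact lt_add_of_pos_right _ (hpos _ hcycle hssub)

end Cycles

section Alternating

variable {α : Type*} {I C : Finset α} {τ : Perm α}

theorem symm_notMem_iff_of_alternating (hC : ∀ v, τ v ∈ C ↔ v ∈ C)
    (halt : ∀ v ∈ C, τ v ∉ I ↔ v ∈ I) : ∀ v ∈ C, τ.symm v ∉ I ↔ v ∈ I := by
  intro v hv
  obtain ⟨u, rfl⟩ := τ.surjective v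
  rw [τ.symm_apply_apply, ← halt u ((hC u).1 hv), not_not]

variable [DecidableEq α]

theorem image_inter_eq_sdiff_of_alternating (hC : ∀ v, τ v ∈ C ↔ v ∈ C)
    (halt : ∀ v ∈ C, τ v ∉ I ↔ v ∈ I) : (I ∩ C).image τ = C \ I := by
  ext v
  obtain ⟨u, rfl⟩ := τ.surjective v
  simp only [Finset.mem_image, Finset.mem_inter, Finset.mem_sdiff, EmbeddingLike.apply_eq_iff_eq,
    exists_eq_right, hC]
  grind

theorem card_symmDiff_of_alternating (hC : ∀ v, τ v ∈ C ↔ v ∈ C)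
    (halt : ∀ v ∈ C, τ v ∉ I ↔ v ∈ I) : (symmDiff I C).card = I.card := by
  calc (symmDiff I C).card = (I \ C).card + (C \ I).card :=
        Finset.card_union_of_disjoint disjoint_sdiff_sdiff
    _ = (I \ C).card + (I ∩ C).card := by
        rw [← image_inter_eq_sdiff_of_alternating hC halt,
          Finset.card_image_of_injective _ τ.injective]
    _ = I.card := Finset.card_sdiff_add_card_inter I C

theorem indep_symmDiff_of_alternating {ι : Type*} [LinearOrder ι] {M : Matroid α}
    (hI : M.Indep I) (hC : ∀ v, τ v ∈ C ↔ v ∈ C) (halt : ∀ v ∈ C, τ v ∉ I ↔ v ∈ I)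
    (hexch : ∀ y ∈ I ∩ C, M.Indep (insert (τ y) (↑I \ {y}))) {q : α → ι}
    (htri : ∀ y ∈ I ∩ C, ∀ x ∈ C \ I, M.Indep (insert x (↑I \ {y})) → x = τ y ∨ q x < q (τ y)) :
    M.Indep ↑(symmDiff I C) := by
  have himage := image_inter_eq_sdiff_of_alternating hC halt
  have hτ : ∀ y ∈ I ∩ C, τ y ∈ C \ I := fun y hy ↦ himage ▸ Finset.mem_image_of_mem τ hy
  have hindep : M.Indep (↑I \ ↑(I ∩ C) ∪ τ '' ↑(I ∩ C)) := by
    refine indep_sdiff_union_image_of_triangular hI (q := q ∘ τ)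
      (fun y hy ↦ by simpa using (Finset.mem_sdiff.1 (hτ y hy)).2) hexch ?_
    intro y hy y' hy' hne hy'y
    exact (htri y hy (τ y') (hτ y' hy') hy'y).resolve_left (τ.injective.ne hne)
  rw [← Finset.coe_image, himage] at hindep
  convert hindep using 1
  simp [symmDiff_def]

end Alternating

section ExchangeGraph

variable {α : Type*} [DecidableEq α] {M₁ M₂ : Matroid α} {I J : Finset α} {u v s : α} {l : List α}

theorem exchAdj_iff_of_mem (hu : u ∈ I) :
    ExchAdj M₁ M₂ I u v ↔ v ∉ I ∧ M₁.Indep (insert v (↑I \ {u})) := by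
  simp [ExchAdj, hu]

theorem exchAdj_iff_of_notMem (hu : u ∉ I) :
    ExchAdj M₁ M₂ I u v ↔ v ∈ I ∧ M₂.Indep (insert u (↑I \ {v})) := by
  simp [ExchAdj, hu]

theorem ExchAdj.notMem_iff (h : ExchAdj M₁ M₂ I u v) : v ∉ I ↔ u ∈ I := by
  unfold ExchAdj at h
  tauto

theorem exists_isCycle_of_mem_symmDiff (hI : CommonIndep M₁ M₂ I) (hJ : CommonIndep M₁ M₂ J)
    (hcard : I.card = J.card) (hs : s ∈ symmDiff J I) :
    ∃ l, IsCycle (ExchAdj M₁ M₂ I) l ∧ s ∈ l := by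
  obtain ⟨f₁, hf₁⟩ := exists_equiv_exchange hI.1 hJ.1 hcard
  obtain ⟨f₂, hf₂⟩ := exists_equiv_exchange hI.2 hJ.2 hcard
  let vertex : ↥(J \ I) ⊕ ↥(I \ J) → α := Sum.elim Subtype.val Subtype.val
  let next : Perm (↥(J \ I) ⊕ ↥(I \ J)) := (sumCongr f₂ f₁.symm).trans (sumComm _ _)
  have hvertex : Function.Injective vertex :=
    Subtype.val_injective.sumElim Subtype.val_injective
      fun x y ↦ disjoint_sdiff_sdiff.forall_ne_finset x.2 y.2
  have hadj : ∀ z, ExchAdj M₁ M₂ I (vertex z) (vertex (next z)) := by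
    rintro (x | y)
    · exact (exchAdj_iff_of_notMem (Finset.mem_sdiff.1 x.2).2).2
        ⟨(Finset.mem_sdiff.1 (f₂ x).2).1, hf₂ x⟩
    · have hexch := hf₁ (f₁.symm y)
      rw [f₁.apply_symm_apply] at hexch
      exact (exchAdj_iff_of_mem (Finset.mem_sdiff.1 y.2).1).2
        ⟨(Finset.mem_sdiff.1 (f₁.symm y).2).2, hexch⟩
  obtain ⟨z, rfl⟩ : ∃ z, vertex z = s := by
    rcases Finset.mem_symmDiff.1 hs with hs | hs
    · exact ⟨.inl ⟨s, Finset.mem_sdiff.2 hs⟩, rfl⟩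
    · exact ⟨.inr ⟨s, Finset.mem_sdiff.2 hs⟩, rfl⟩
  obtain ⟨l, hl, hz⟩ := exists_isCycle_of_injective
    (Adj := fun a b ↦ ExchAdj M₁ M₂ I (vertex a) (vertex b)) next.injective hadj z
  exact ⟨l.map vertex, hl.map hvertex, List.mem_map_of_mem hz⟩

theorem IsCycle.formPerm_notMem_iff (hl : IsCycle (ExchAdj M₁ M₂ I) l) :
    ∀ v ∈ l.toFinset, l.formPerm v ∉ I ↔ v ∈ I :=
  fun _ hv ↦ (hl.adj_formPerm (List.mem_toFinset.1 hv)).notMem_iff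

theorem IsCycle.card_symmDiff (hl : IsCycle (ExchAdj M₁ M₂ I) l) :
    (symmDiff I l.toFinset).card = I.card :=
  card_symmDiff_of_alternating (fun _ ↦ hl.isCycleOn_formPerm.apply_mem_iff)
    hl.formPerm_notMem_iff

variable {R : Type*} [AddCommGroup R] [LinearOrder R] [IsOrderedAddMonoid R] {w : α → R}

theorem IsCycle.commonIndep_symmDiff_of_sum_eq_zero (hl : IsCycle (ExchAdj M₁ M₂ I) l)
    (hI : CommonIndep M₁ M₂ I) (hsum : (l.map w).sum = 0)
    (hpos : ∀ l', IsCycle (ExchAdj M₁ M₂ I) l' → l'.toFinset ⊂ l.toFinset →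
      0 < (l'.map w).sum) :
    CommonIndep M₁ M₂ (symmDiff I l.toFinset) := by
  set σ := l.formPerm
  obtain ⟨p, hp⟩ := exists_potential_of_sum_eq_zero hl.2.2.2 hsum
  have hchord : ∀ u ∈ l.toFinset, ∀ v ∈ l.toFinset, ExchAdj M₁ M₂ I u v →
      v = σ u ∨ p v < p (σ u) := by
    intro u hu v hv huv
    rw [List.mem_toFinset] at hu hv
    exact or_iff_not_imp_left.2 (hl.potential_lt_of_chord hp hpos hu hv huv)
  have hadj : ∀ v ∈ l.toFinset, ExchAdj M₁ M₂ I v (σ v) :=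
    fun v hv ↦ hl.adj_formPerm (List.mem_toFinset.1 hv)
  have hC : ∀ v, σ v ∈ l.toFinset ↔ v ∈ l.toFinset :=
    fun _ ↦ hl.isCycleOn_formPerm.apply_mem_iff
  have hC' : ∀ v, σ.symm v ∈ l.toFinset ↔ v ∈ l.toFinset := fun v ↦ by rw [← hC]; simp
  have halt' := symm_notMem_iff_of_alternating hC hl.formPerm_notMem_iff
  constructor
  · refine indep_symmDiff_of_alternating hI.1 hC hl.formPerm_notMem_iff (q := p) ?_ ?_
    · intro y hy
      rw [Finset.mem_inter] at hy
      exact ((exchAdj_iff_of_mem hy.1).1 (hadj y hy.2)).2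
    · intro y hy x hx hxy
      rw [Finset.mem_inter] at hy
      rw [Finset.mem_sdiff] at hx
      exact hchord y hy.2 x hx.1 ((exchAdj_iff_of_mem hy.1).2 ⟨hx.2, hxy⟩)
  · refine indep_symmDiff_of_alternating hI.2 hC' halt' (q := fun x ↦ -p (σ x)) ?_ ?_
    · intro y hy
      rw [Finset.mem_inter] at hy
      have := hadj (σ.symm y) ((hC' y).2 hy.2)
      rw [σ.apply_symm_apply] at this
      exact ((exchAdj_iff_of_notMem ((halt' y hy.2).2 hy.1)).1 this).2
    · intro y hy x hx hxy
      rw [Finset.mem_inter] at hy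
      rw [Finset.mem_sdiff] at hx
      simpa [Equiv.eq_symm_apply, eq_comm] using
        hchord x hx.1 y hy.2 ((exchAdj_iff_of_notMem hx.2).2 ⟨hy.1, hxy⟩)

theorem IsCycle.commonIndep_symmDiff_of_forall_lt (hl : IsCycle (ExchAdj M₁ M₂ I) l)
    (hI : CommonIndep M₁ M₂ I) (hv : v ∈ l)
    (hlt : ∀ l', IsCycle (ExchAdj M₁ M₂ I) l' → l'.toFinset ⊂ l.toFinset →
      (if v ∈ l' then (l.map w).sum else 0) < (l'.map w).sum) :
    CommonIndep M₁ M₂ (symmDiff I l.toFinset) := by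
  have hsum : ∀ l', IsCycle (ExchAdj M₁ M₂ I) l' →
      (l'.map (w - Pi.single v (l.map w).sum)).sum =
        (l'.map w).sum - if v ∈ l' then (l.map w).sum else 0 := by
    rintro l' ⟨-, -, -, hnodup⟩
    simp [← List.sum_toFinset _ hnodup, Finset.sum_pi_single']
  refine hl.commonIndep_symmDiff_of_sum_eq_zero hI (w := w - Pi.single v (l.map w).sum) ?_ ?_
  · simp [hsum l hl, hv]
  · intro l' hl' hssub
    simpa only [hsum l' hl', sub_pos] using hlt l' hl' hssub

end ExchangeGraph

section Isolation

variable {α : Type*} [DecidableEq α] {M₁ M₂ : Matroid α} {W : α → ℤ} {k : ℕ} {I : Finset α}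
  {l : List α} {s : α}

theorem setW_symmDiff_toFinset (W : α → ℤ) (I : Finset α) (hl : l.Nodup) :
    setW W (symmDiff I l.toFinset) = setW W I + listW W I l := by
  set C := l.toFinset with hC
  have hsymm : setW W (symmDiff I C) = ∑ x ∈ I \ C, W x + ∑ x ∈ C \ I, W x :=
    Finset.sum_union disjoint_sdiff_sdiff
  have hset : setW W I = ∑ x ∈ C ∩ I, W x + ∑ x ∈ I \ C, W x := by
    rw [setW, ← Finset.sum_inter_add_sum_sdiff I C, Finset.inter_comm]
  have hlist : listW W I l = -∑ x ∈ C ∩ I, W x + ∑ x ∈ C \ I, W x := by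
    rw [listW, ← List.sum_toFinset _ hl, ← hC, ← Finset.sum_inter_add_sum_sdiff C I,
      ← Finset.sum_neg_distrib]
    congr 1 <;> exact Finset.sum_congr rfl fun x hx ↦ by simp_all [exchWt]
  rw [hsymm, hset, hlist]
  ring

theorem Isolates.listW_pos (hiso : Isolates M₁ M₂ W k I) (hl : IsCycle (ExchAdj M₁ M₂ I) l) :
    0 < listW W I l := by
  induction hC : l.toFinset using Finset.strongInduction generalizing l with
  | H C ih =>
    subst hC
    by_contra! hle
    obtain ⟨v, hv⟩ := List.exists_mem_of_ne_nil l hl.1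
    have hcommon : CommonIndep M₁ M₂ (symmDiff I l.toFinset) := by
      refine hl.commonIndep_symmDiff_of_forall_lt hiso.1 hv (w := exchWt W I)
        fun l' hl' hssub ↦ ?_
      have hpos : 0 < listW W I l' := ih _ hssub hl' rfl
      split_ifs
      exacts [hle.trans_lt hpos, hpos]
    have hne : symmDiff I l.toFinset ≠ I := by
      simpa [symmDiff_eq_left] using hl.1
    have hlt := hiso.2.2 _ hcommon (hl.card_symmDiff.trans hiso.2.1) hne
    rw [setW_symmDiff_toFinset W I hl.2.2.2] at hlt
    linarith

theorem Isolates.exists_mem_symmDiff_of_isCycle (hiso : Isolates M₁ M₂ W k I)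
    (hl : IsCycle (ExchAdj M₁ M₂ I) l) (hs : s ∈ l) :
    ∃ J, CommonIndep M₁ M₂ J ∧ J.card = k ∧ s ∈ symmDiff J I := by
  induction hC : l.toFinset using Finset.strongInduction generalizing l with
  | H C ih =>
    subst hC
    by_cases hshort : ∃ l', IsCycle (ExchAdj M₁ M₂ I) l' ∧ l'.toFinset ⊂ l.toFinset ∧ s ∈ l'
    · obtain ⟨l', hl', hssub, hs'⟩ := hshort
      exact ih _ hssub hl' hs' rfl
    push Not at hshort
    refine ⟨symmDiff I l.toFinset, ?_, hl.card_symmDiff.trans hiso.2.1, ?_⟩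
    · refine hl.commonIndep_symmDiff_of_forall_lt hiso.1 hs (w := exchWt W I)
        fun l' hl' hssub ↦ ?_
      rw [if_neg (hshort l' hl' hssub)]
      exact hiso.listW_pos hl'
    · simpa [symmDiff_comm I] using hs

end Isolation

theorem exists_symmDiff_iff_cycle_general {α : Type*} [DecidableEq α] (M₁ M₂ : Matroid α)
    (W : α → ℤ) (k : ℕ) (Ik : Finset α) (hiso : Isolates M₁ M₂ W k Ik) (s : α) :
    (∃ I : Finset α, CommonIndep M₁ M₂ I ∧ I.card = k ∧ s ∈ symmDiff I Ik) ↔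
    (∃ l : List α, IsCycle (ExchAdj M₁ M₂ Ik) l ∧ s ∈ l) := by
  constructor
  · rintro ⟨I, hI, hcard, hs⟩
    exact exists_isCycle_of_mem_symmDiff hiso.1 hI (hiso.2.1.trans hcard.symm) hs
  · rintro ⟨l, hl, hs⟩
    exact hiso.exists_mem_symmDiff_of_isCycle hl hs

/-- Suppose `W` isolates a size-`k` common independent set `I_k` and `s ∈ S`. Then there is
a size-`k` common independent set `I` with `s ∈ I Δ I_k` iff the exchange graph
`𝓔(M₁,M₂,I_k)` contains a directed cycle through `s`. -/
theorem exists_symmDiff_iff_cycle {α : Type*} [Fintype α] [DecidableEq α]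
    (M₁ M₂ : Matroid α) (hE₁ : M₁.E = Set.univ) (hE₂ : M₂.E = Set.univ)
    (W : α → ℤ) (k : ℕ) (Ik : Finset α) (hiso : Isolates M₁ M₂ W k Ik) (s : α) :
    (∃ I : Finset α, CommonIndep M₁ M₂ I ∧ I.card = k ∧ s ∈ symmDiff I Ik) ↔
    (∃ l : List α, IsCycle (ExchAdj M₁ M₂ Ik) l ∧ s ∈ l) :=
  exists_symmDiff_iff_cycle_general M₁ M₂ W k Ik hiso s
end

section
/- Suppose matroids M₁ and M₂ have some common independent set of size k+1, and let s ∈ S with {s} ∈ 𝓘₁ ∩ 𝓘₂. Then s is a (k+1)-threshold element if and only if the following three conditions hold: M₁↾s and M₂↾s have a common independent set of size k; M₁ − s and M₂ − s have a common independent set of size k+1; and min_k(M₁↾s, M₂↾s) + W(s) = min_{k+1}(M₁ − s, M₂ − s). -/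
/-- `s` is a `(k+1)`-threshold element: there are two minimum-weight size-`(k+1)` common
independent sets `I` and `I'` with `s ∈ I` and `s ∉ I'`. -/
def IsThreshold {α : Type*} (M₁ M₂ : Matroid α) (W : α → ℤ) (k : ℕ) (s : α) : Prop :=
  ∃ I I' : Finset α, IsMinWtOfSize M₁ M₂ W (k + 1) I ∧ IsMinWtOfSize M₁ M₂ W (k + 1) I' ∧
    s ∈ I ∧ s ∉ I'

/-- `I` is a common independent set of the inclusion matroids `M₁↾s` and `M₂↾s`:
`I ⊆ S \ {s}` and `I ∪ {s}` is independent in both `M₁` and `M₂`. -/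
def InclCI {α : Type*} [DecidableEq α] (M₁ M₂ : Matroid α) (s : α) (I : Finset α) : Prop :=
  s ∉ I ∧ M₁.Indep ↑(insert s I) ∧ M₂.Indep ↑(insert s I)

/-- `I` is a common independent set of the exclusion matroids `M₁ − s` and `M₂ − s`:
`I ⊆ S \ {s}` and `I` is independent in both `M₁` and `M₂`. -/
def ExclCI {α : Type*} (M₁ M₂ : Matroid α) (s : α) (I : Finset α) : Prop :=
  s ∉ I ∧ M₁.Indep ↑I ∧ M₂.Indep ↑I

/-! Sort the common independent sets of size `k + 1` by whether they contain `s`. Two minimizers,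
one of each kind, exist iff both kinds attain their least weight and these agree. Deleting `s`
identifies the sets containing `s` with the size-`k` common independent sets of the inclusion
matroids and lowers their weight by `W s`. -/

section SetFamily

variable {α G : Type*}

/-- The family analogue of the inclusion matroid: the sets `I ∌ s` with `I ∪ {s} ∈ 𝓕`. -/
def inclusionFamily [DecidableEq α] (𝓕 : Set (Finset α)) (s : α) : Set (Finset α) :=
  {I | s ∉ I ∧ insert s I ∈ 𝓕}

/-- The family analogue of the exclusion matroid: the members of `𝓕` avoiding `s`. -/
def exclusionFamily (𝓕 : Set (Finset α)) (s : α) : Set (Finset α) :=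
  {I | s ∉ I ∧ I ∈ 𝓕}

/-- The weights of the size-`n` members of `𝓕`. The minimum `min_n` of the paper is expressed as
`IsLeast` of this set, so that it carries no default value when there is no such member. -/
def weightsOfSize [AddCommMonoid G] (𝓕 : Set (Finset α)) (W : α → G) (n : ℕ) : Set G :=
  {w | ∃ I : Finset α, I ∈ 𝓕 ∧ I.card = n ∧ ∑ x ∈ I, W x = w}

/-- `I` is a minimum-weight size-`n` member of `𝓕`: the notion `IsMinWtOfSize` for an arbitrary
family in place of the common independent sets of two matroids. -/
def IsMinWeightIn [AddCommMonoid G] [LE G] (𝓕 : Set (Finset α)) (W : α → G) (n : ℕ)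
    (I : Finset α) : Prop :=
  I ∈ 𝓕 ∧ I.card = n ∧ ∀ J : Finset α, J ∈ 𝓕 → J.card = n → ∑ x ∈ I, W x ≤ ∑ x ∈ J, W x

section AddCommMonoid

variable [AddCommMonoid G] {𝓐 𝓑 𝓕 : Set (Finset α)} {W : α → G} {n : ℕ} {I : Finset α}

theorem IsMinWeightIn.of_subset [LE G] (h : IsMinWeightIn 𝓕 W n I) (h𝓐 : 𝓐 ⊆ 𝓕) (hI : I ∈ 𝓐) :
    IsMinWeightIn 𝓐 W n I :=
  ⟨hI, h.2.1, fun J hJ => h.2.2 J (h𝓐 hJ)⟩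

theorem IsMinWeightIn.sum_eq_sum [PartialOrder G] {J : Finset α} (hI : IsMinWeightIn 𝓕 W n I)
    (hJ : IsMinWeightIn 𝓕 W n J) : ∑ x ∈ I, W x = ∑ x ∈ J, W x :=
  le_antisymm (hI.2.2 J hJ.1 hJ.2.1) (hJ.2.2 I hI.1 hI.2.1)

theorem isLeast_weightsOfSize_iff [LE G] {m : G} :
    IsLeast (weightsOfSize 𝓕 W n) m ↔ ∃ I, IsMinWeightIn 𝓕 W n I ∧ ∑ x ∈ I, W x = m := by
  constructor
  · rintro ⟨⟨I, hI, hcard, rfl⟩, hmin⟩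
    exact ⟨I, ⟨hI, hcard, fun J hJ hJcard => hmin ⟨J, hJ, hJcard, rfl⟩⟩, rfl⟩
  · rintro ⟨I, ⟨hI, hcard, hmin⟩, rfl⟩
    refine ⟨⟨I, hI, hcard, rfl⟩, ?_⟩
    rintro _ ⟨J, hJ, hJcard, rfl⟩
    exact hmin J hJ hJcard

theorem isMinWeightIn_union_iff [LE G] :
    IsMinWeightIn (𝓐 ∪ 𝓑) W n I ↔ I ∈ 𝓐 ∪ 𝓑 ∧ I.card = n ∧
      (∀ J ∈ 𝓐, J.card = n → ∑ x ∈ I, W x ≤ ∑ x ∈ J, W x) ∧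
      ∀ J ∈ 𝓑, J.card = n → ∑ x ∈ I, W x ≤ ∑ x ∈ J, W x := by
  simp only [IsMinWeightIn, Set.mem_union, or_imp, forall_and]

theorem exists_isMinWeightIn_union_iff [PartialOrder G] :
    (∃ I ∈ 𝓐, ∃ J ∈ 𝓑, IsMinWeightIn (𝓐 ∪ 𝓑) W n I ∧ IsMinWeightIn (𝓐 ∪ 𝓑) W n J) ↔
      ∃ m, IsLeast (weightsOfSize 𝓐 W n) m ∧ IsLeast (weightsOfSize 𝓑 W n) m := by
  simp only [isLeast_weightsOfSize_iff]
  constructor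
  · rintro ⟨I, hI𝓐, J, hJ𝓑, hI, hJ⟩
    exact ⟨∑ x ∈ J, W x, ⟨I, hI.of_subset Set.subset_union_left hI𝓐, hI.sum_eq_sum hJ⟩,
      ⟨J, hJ.of_subset Set.subset_union_right hJ𝓑, rfl⟩⟩
  · rintro ⟨m, ⟨I, ⟨hI𝓐, hIcard, hImin⟩, rfl⟩, ⟨J, ⟨hJ𝓑, hJcard, hJmin⟩, hJI⟩⟩
    refine ⟨I, hI𝓐, J, hJ𝓑, isMinWeightIn_union_iff.2 ⟨.inl hI𝓐, hIcard, hImin, ?_⟩,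
      isMinWeightIn_union_iff.2 ⟨.inr hJ𝓑, hJcard, ?_, hJmin⟩⟩
    · rwa [← hJI]
    · rwa [hJI]

theorem weightsOfSize_setOf_mem [DecidableEq α] (𝓕 : Set (Finset α)) (W : α → G) (k : ℕ) (s : α) :
    weightsOfSize {I ∈ 𝓕 | s ∈ I} W (k + 1) =
      (· + W s) '' weightsOfSize (inclusionFamily 𝓕 s) W k := by
  ext w
  constructor
  · rintro ⟨I, ⟨hI, hs⟩, hcard, rfl⟩
    refine ⟨_, ⟨I.erase s, ⟨I.notMem_erase s, ?_⟩, ?_, rfl⟩, Finset.sum_erase_add I W hs⟩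
    · rwa [Finset.insert_erase hs]
    · rw [Finset.card_erase_of_mem hs, hcard, Nat.add_sub_cancel]
  · rintro ⟨_, ⟨I, ⟨hs, hI⟩, hcard, rfl⟩, rfl⟩
    refine ⟨insert s I, ⟨hI, Finset.mem_insert_self s I⟩, ?_, ?_⟩
    · rw [Finset.card_insert_of_notMem hs, hcard]
    · rw [Finset.sum_insert hs, add_comm]

end AddCommMonoid

theorem setOf_mem_union_exclusionFamily (𝓕 : Set (Finset α)) (s : α) :
    {I ∈ 𝓕 | s ∈ I} ∪ exclusionFamily 𝓕 s = 𝓕 := by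
  ext I
  simp only [exclusionFamily, Set.mem_union, Set.mem_ofPred_eq]
  tauto

theorem isLeast_image_add_right_iff [Add G] [Preorder G] [AddRightMono G]
    [AddRightReflectLE G] {A : Set G} {c m : G} :
    IsLeast ((· + c) '' A) m ↔ ∃ a, IsLeast A a ∧ a + c = m := by
  constructor
  · rintro ⟨⟨a, ha, rfl⟩, hmin⟩
    exact ⟨a, ⟨ha, fun b hb => le_of_add_le_add_right (hmin ⟨b, hb, rfl⟩)⟩, rfl⟩
  · rintro ⟨a, ha, rfl⟩
    exact add_left_mono.map_isLeast ha

theorem threshold_iff_incl_excl_general [DecidableEq α] [AddCommMonoid G] [PartialOrder G]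
    [IsOrderedCancelAddMonoid G] (𝓕 : Set (Finset α)) (W : α → G) (k : ℕ) (s : α) :
    (∃ I I' : Finset α, IsMinWeightIn 𝓕 W (k + 1) I ∧ IsMinWeightIn 𝓕 W (k + 1) I' ∧
        s ∈ I ∧ s ∉ I') ↔
      (∃ I ∈ inclusionFamily 𝓕 s, I.card = k) ∧
      (∃ I ∈ exclusionFamily 𝓕 s, I.card = k + 1) ∧
      ∃ a b : G, IsLeast (weightsOfSize (inclusionFamily 𝓕 s) W k) a ∧
        IsLeast (weightsOfSize (exclusionFamily 𝓕 s) W (k + 1)) b ∧ a + W s = b := by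
  have minimizers_iff := exists_isMinWeightIn_union_iff (𝓐 := {I ∈ 𝓕 | s ∈ I})
    (𝓑 := exclusionFamily 𝓕 s) (W := W) (n := k + 1)
  rw [setOf_mem_union_exclusionFamily, weightsOfSize_setOf_mem] at minimizers_iff
  simp only [isLeast_image_add_right_iff] at minimizers_iff
  constructor
  · rintro ⟨I, I', hI, hI', hs, hs'⟩
    obtain ⟨_, ⟨a, ha, rfl⟩, hb⟩ :=
      minimizers_iff.1 ⟨I, ⟨hI.1, hs⟩, I', ⟨hs', hI'.1⟩, hI, hI'⟩
    obtain ⟨J, hJ, hJcard, -⟩ := ha.1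
    exact ⟨⟨J, hJ, hJcard⟩, ⟨I', ⟨hs', hI'.1⟩, hI'.2.1⟩, a, a + W s, ha, hb, rfl⟩
  · rintro ⟨-, -, a, b, ha, hb, hab⟩
    obtain ⟨I, hI𝓕, I', hI'𝓕, hI, hI'⟩ := minimizers_iff.2 ⟨b, ⟨a, ha, hab⟩, hb⟩
    exact ⟨I, I', hI, hI', hI𝓕.2, hI'𝓕.1⟩

end SetFamily

/-- Suppose a size-`(k+1)` common independent set of `M₁`, `M₂` exists and `{s} ∈ 𝓘₁ ∩ 𝓘₂`.
Then `s` is a `(k+1)`-threshold element iff: `M₁↾s` and `M₂↾s` have a common independent set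
of size `k`; `M₁ − s` and `M₂ − s` have a common independent set of size `k+1`; and
`min_k(M₁↾s, M₂↾s) + W(s) = min_{k+1}(M₁ − s, M₂ − s)`. -/
theorem threshold_iff_incl_excl {α : Type*} [Fintype α] [DecidableEq α]
    (M₁ M₂ : Matroid α) (hE₁ : M₁.E = Set.univ) (hE₂ : M₂.E = Set.univ)
    (W : α → ℤ) (k : ℕ)
    (hex : ∃ J : Finset α, CommonIndep M₁ M₂ J ∧ J.card = k + 1)
    (s : α) (hs₁ : M₁.Indep {s}) (hs₂ : M₂.Indep {s}) :
    IsThreshold M₁ M₂ W k s ↔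
      ((∃ I : Finset α, InclCI M₁ M₂ s I ∧ I.card = k) ∧
       (∃ I : Finset α, ExclCI M₁ M₂ s I ∧ I.card = k + 1) ∧
       ∃ a b : ℤ,
         IsLeast {w : ℤ | ∃ I : Finset α, InclCI M₁ M₂ s I ∧ I.card = k ∧ setW W I = w} a ∧
         IsLeast {w : ℤ | ∃ I : Finset α, ExclCI M₁ M₂ s I ∧ I.card = k + 1 ∧ setW W I = w} b ∧
         a + W s = b) :=
  -- The matroid notions unfold definitionally to those of the family `{I | CommonIndep M₁ M₂ I}`.
  threshold_iff_incl_excl_general {I | CommonIndep M₁ M₂ I} W k s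
end

section
/- Suppose W isolates a size-k common independent set of matroids M₁ and M₂, some common independent set of size k+1 exists, and s is a (k+1)-threshold element with {s} ∈ 𝓘₁ ∩ 𝓘₂. Then min_{k+1}(M₁,M₂) = min_{k+1}(M₁ − s, M₂ − s) and min_{k+1}(M₁,M₂) − W(s) = min_k(M₁↾s, M₂↾s). In particular, W(s) = min_{k+1}(M₁ − s, M₂ − s) − min_k(M₁↾s, M₂↾s), so W(s) is determined by M₁, M₂, s, k and the restriction of W to S ∖ {s}. -/
/-! Minimum-weight members of a set family pass to the deletion of an element they avoid and,
after erasing it, to the link of an element they contain. A threshold element `s` has minimizers of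
both kinds, of equal weight, and erasing `s` from the one containing it lowers the weight by
`W s`. -/

/-- The members of the family `F` that avoid `s`; for the family of common independent sets
these are the common independent sets of the exclusion matroids. -/
def familyDeletion {α : Type*} (F : Set (Finset α)) (s : α) : Set (Finset α) :=
  {I | s ∉ I ∧ I ∈ F}

/-- The members of the family `F` that contain `s`, with `s` erased; for the family of common
independent sets these are the common independent sets of the inclusion matroids. -/
def familyLink {α : Type*} [DecidableEq α] (F : Set (Finset α)) (s : α) : Set (Finset α) :=
  {I | s ∉ I ∧ insert s I ∈ F}

/-- The weights of the size-`k` members of the family `F`. The least element of this set, if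
there is one, plays the role of `min_k`. -/
def weightsOfCard {α Γ : Type*} [AddCommMonoid Γ] (F : Set (Finset α)) (W : α → Γ) (k : ℕ) :
    Set Γ :=
  {w | ∃ I, I ∈ F ∧ I.card = k ∧ ∑ x ∈ I, W x = w}

/-- `I` is a minimum-weight size-`k` member of the family `F`. For a partial order on the weights
this asks for a least weight, not just a minimal one. -/
def IsMinWeightOfCard {α Γ : Type*} [AddCommMonoid Γ] [LE Γ] (F : Set (Finset α)) (W : α → Γ)
    (k : ℕ) (I : Finset α) : Prop :=
  I ∈ F ∧ I.card = k ∧ ∀ J ∈ F, J.card = k → ∑ x ∈ I, W x ≤ ∑ x ∈ J, W x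

namespace IsMinWeightOfCard

variable {α Γ : Type*} {F : Set (Finset α)} {W : α → Γ} {k : ℕ} {s : α} {I : Finset α}

theorem isLeast_weightsOfCard [AddCommMonoid Γ] [LE Γ] (hI : IsMinWeightOfCard F W k I) :
    IsLeast (weightsOfCard F W k) (∑ x ∈ I, W x) := by
  obtain ⟨hmem, hcard, hmin⟩ := hI
  refine ⟨⟨I, hmem, hcard, rfl⟩, ?_⟩
  rintro _ ⟨J, hJ, hJcard, rfl⟩
  exact hmin J hJ hJcard

theorem deletion [AddCommMonoid Γ] [LE Γ] (hI : IsMinWeightOfCard F W k I) (hs : s ∉ I) :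
    IsMinWeightOfCard (familyDeletion F s) W k I :=
  ⟨⟨hs, hI.1⟩, hI.2.1, fun J hJ => hI.2.2 J hJ.2⟩

theorem link [DecidableEq α] [AddCommMonoid Γ] [PartialOrder Γ] [IsOrderedCancelAddMonoid Γ]
    (hI : IsMinWeightOfCard F W (k + 1) I) (hs : s ∈ I) :
    IsMinWeightOfCard (familyLink F s) W k (I.erase s) := by
  obtain ⟨hmem, hcard, hmin⟩ := hI
  refine ⟨⟨Finset.notMem_erase s I, ?_⟩, ?_, ?_⟩
  · rwa [Finset.insert_erase hs]
  · rw [Finset.card_erase_of_mem hs, hcard, Nat.add_sub_cancel]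
  · rintro J ⟨hsJ, hJ⟩ hJcard
    have hinsert : (insert s J).card = k + 1 := by rw [Finset.card_insert_of_notMem hsJ, hJcard]
    refine le_of_add_le_add_left (a := W s) ?_
    calc
      W s + ∑ x ∈ I.erase s, W x = ∑ x ∈ I, W x := Finset.add_sum_erase I W hs
      _ ≤ ∑ x ∈ insert s J, W x := hmin _ hJ hinsert
      _ = W s + ∑ x ∈ J, W x := Finset.sum_insert hsJ

end IsMinWeightOfCard

theorem threshold_weight_recovery_general {α Γ : Type*} [DecidableEq α] [AddCommGroup Γ]
    [PartialOrder Γ] [IsOrderedAddMonoid Γ] (F : Set (Finset α)) (W : α → Γ) (k : ℕ) (s : α)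
    (hthr : ∃ I I' : Finset α, IsMinWeightOfCard F W (k + 1) I ∧
      IsMinWeightOfCard F W (k + 1) I' ∧ s ∈ I ∧ s ∉ I') :
    ∃ m a b : Γ,
      IsLeast (weightsOfCard F W (k + 1)) m ∧
      IsLeast (weightsOfCard (familyLink F s) W k) a ∧
      IsLeast (weightsOfCard (familyDeletion F s) W (k + 1)) b ∧
      m = b ∧ m - W s = a ∧ W s = b - a := by
  obtain ⟨I, I', hI, hI', hs, hs'⟩ := hthr
  have hweight : ∑ x ∈ I, W x = ∑ x ∈ I', W x :=
    hI.isLeast_weightsOfCard.unique hI'.isLeast_weightsOfCard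
  have herase : ∑ x ∈ I, W x - W s = ∑ x ∈ I.erase s, W x :=
    (Finset.sum_erase_eq_sub hs).symm
  exact ⟨_, _, _, hI.isLeast_weightsOfCard, (hI.link hs).isLeast_weightsOfCard,
    (hI'.deletion hs').isLeast_weightsOfCard, hweight, herase,
    by rw [← hweight, ← herase, sub_sub_cancel]⟩

/-- Suppose `W` isolates a size-`k` common independent set, some size-`(k+1)` common
independent set exists, and `s` is a `(k+1)`-threshold element with `{s} ∈ 𝓘₁ ∩ 𝓘₂`. Then
`min_{k+1}(M₁,M₂) = min_{k+1}(M₁ − s, M₂ − s)` and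
`min_{k+1}(M₁,M₂) − W(s) = min_k(M₁↾s, M₂↾s)`; in particular
`W(s) = min_{k+1}(M₁ − s, M₂ − s) − min_k(M₁↾s, M₂↾s)`. -/
theorem threshold_weight_recovery {α : Type*} [Fintype α] [DecidableEq α]
    (M₁ M₂ : Matroid α) (hE₁ : M₁.E = Set.univ) (hE₂ : M₂.E = Set.univ)
    (W : α → ℤ) (k : ℕ) (hiso : ∃ Ik : Finset α, Isolates M₁ M₂ W k Ik)
    (hex : ∃ J : Finset α, CommonIndep M₁ M₂ J ∧ J.card = k + 1)
    (s : α) (hs₁ : M₁.Indep {s}) (hs₂ : M₂.Indep {s})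
    (hthr : IsThreshold M₁ M₂ W k s) :
    ∃ m a b : ℤ,
      IsLeast {w : ℤ | ∃ I : Finset α,
        CommonIndep M₁ M₂ I ∧ I.card = k + 1 ∧ setW W I = w} m ∧
      IsLeast {w : ℤ | ∃ I : Finset α, InclCI M₁ M₂ s I ∧ I.card = k ∧ setW W I = w} a ∧
      IsLeast {w : ℤ | ∃ I : Finset α, ExclCI M₁ M₂ s I ∧ I.card = k + 1 ∧ setW W I = w} b ∧
      m = b ∧ m - W s = a ∧ W s = b - a :=
  threshold_weight_recovery_general {I | CommonIndep M₁ M₂ I} W k s hthr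
end

section
/- Suppose W isolates a size-k common independent set I_k of matroids M₁ and M₂, let s ∈ S, let b = 1 if s ∈ I_k and b = 0 otherwise, and define W′ : S → ℤ by W′(x) = W(x) for x ≠ s and W′(s) = (−1)^b · (1 + Σ_{x ∈ S∖{s}} |W(x)|). Then: (i) I_k is the unique minimum-weight size-k common independent set with respect to W′; and (ii) for all subsets S₁, S₂ ⊆ S such that s ∈ S₁ if and only if s ∈ S₂, one has W′(S₁) ≤ W′(S₂) if and only if W(S₁) ≤ W(S₂). -/
/-!
Off `s` the two weights agree, so modifying the weight of `s` shifts two sets by the same amount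
whenever both or neither of them contain `s`; their order is therefore preserved. If exactly one of
`I` and `J` contains `s`, the new weight of `s` exceeds in absolute value the total `∑ |W x|` over
the remaining elements, so its sign alone decides the comparison, and that sign favours `I`.
-/

section WeightSums

variable {α G : Type*} [AddCommGroup G] [LinearOrder G] [IsOrderedAddMonoid G]
  {E A B : Finset α} {s : α} {w w' : α → G}

theorem sum_sub_sum_le_sum_abs (hA : A ⊆ E) (hB : B ⊆ E) (w : α → G) :
    ∑ x ∈ A, w x - ∑ x ∈ B, w x ≤ ∑ x ∈ E, |w x| := by
  classical
  have hdisj : Disjoint (A \ B) (B \ A) := disjoint_sdiff_sdiff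
  have hsub : A \ B ∪ B \ A ⊆ E :=
    Finset.union_subset (Finset.sdiff_subset.trans hA) (Finset.sdiff_subset.trans hB)
  calc ∑ x ∈ A, w x - ∑ x ∈ B, w x
      = ∑ x ∈ A \ B, w x + ∑ x ∈ B \ A, -w x := by
        rw [← Finset.sum_sdiff_sub_sum_sdiff, Finset.sum_neg_distrib, sub_eq_add_neg]
    _ ≤ ∑ x ∈ A \ B, |w x| + ∑ x ∈ B \ A, |w x| :=
        add_le_add (Finset.sum_le_sum fun _ _ => le_abs_self _)
          (Finset.sum_le_sum fun _ _ => neg_le_abs _)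
    _ = ∑ x ∈ A \ B ∪ B \ A, |w x| := (Finset.sum_union hdisj).symm
    _ ≤ ∑ x ∈ E, |w x| := Finset.sum_le_sum_of_subset_of_nonneg hsub fun _ _ _ => abs_nonneg _

theorem sum_lt_sum_of_lt_neg_sum_abs [DecidableEq α] (hA : A ⊆ E) (hB : B ⊆ E)
    (hsA : s ∈ A) (hsB : s ∉ B) (hs : w s < -∑ x ∈ E.erase s, |w x|) :
    ∑ x ∈ A, w x < ∑ x ∈ B, w x := by
  have hbound := sum_sub_sum_le_sum_abs (Finset.erase_subset_erase s hA)
    (Finset.subset_erase.2 ⟨hB, hsB⟩) w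
  calc ∑ x ∈ A, w x
      = w s + ∑ x ∈ A.erase s, w x := (Finset.add_sum_erase A w hsA).symm
    _ < -∑ x ∈ E.erase s, |w x| + ∑ x ∈ A.erase s, w x := by gcongr
    _ ≤ ∑ x ∈ B, w x := by rwa [neg_add_le_iff_le_add, ← sub_le_iff_le_add]

theorem sum_lt_sum_of_sum_abs_lt [DecidableEq α] (hA : A ⊆ E) (hB : B ⊆ E)
    (hsA : s ∉ A) (hsB : s ∈ B) (hs : ∑ x ∈ E.erase s, |w x| < w s) :
    ∑ x ∈ A, w x < ∑ x ∈ B, w x := by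
  have hneg : ∑ x ∈ B, -w x < ∑ x ∈ A, -w x :=
    sum_lt_sum_of_lt_neg_sum_abs hB hA hsB hsA (by simpa only [abs_neg, neg_lt_neg_iff] using hs)
  simpa only [Finset.sum_neg_distrib, neg_lt_neg_iff] using hneg

theorem sum_le_sum_iff_sum_erase_le [DecidableEq α] (h : s ∈ A ↔ s ∈ B) (w : α → G) :
    ∑ x ∈ A, w x ≤ ∑ x ∈ B, w x ↔ ∑ x ∈ A.erase s, w x ≤ ∑ x ∈ B.erase s, w x := by
  by_cases hsA : s ∈ A
  · rw [← Finset.add_sum_erase A w hsA, ← Finset.add_sum_erase B w (h.1 hsA), add_le_add_iff_left]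
  · rw [Finset.erase_eq_of_notMem hsA, Finset.erase_eq_of_notMem (mt h.2 hsA)]

theorem sum_le_sum_iff_of_eq_off (hw : ∀ x ≠ s, w' x = w x) (h : s ∈ A ↔ s ∈ B) :
    ∑ x ∈ A, w' x ≤ ∑ x ∈ B, w' x ↔ ∑ x ∈ A, w x ≤ ∑ x ∈ B, w x := by
  classical
  have hsum (C : Finset α) : ∑ x ∈ C.erase s, w' x = ∑ x ∈ C.erase s, w x :=
    Finset.sum_congr rfl fun x hx => hw x (Finset.ne_of_mem_erase hx)
  rw [sum_le_sum_iff_sum_erase_le h w', sum_le_sum_iff_sum_erase_le h w, hsum, hsum]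

end WeightSums

/-- The weight function `w` isolates `I` in the family `F` of finite sets: `I` is the unique
member of `F` of minimum weight. It abstracts `Isolates` from the common independent sets of a
given size to an arbitrary family, so that no matroid enters the general theorem. -/
def IsolatesIn {α G : Type*} [AddCommMonoid G] [LT G] (F : Set (Finset α)) (w : α → G)
    (I : Finset α) : Prop :=
  I ∈ F ∧ ∀ J ∈ F, J ≠ I → ∑ x ∈ I, w x < ∑ x ∈ J, w x

theorem isolates_iff_isolatesIn {α : Type*} {M₁ M₂ : Matroid α} {W : α → ℤ} {k : ℕ}
    {I : Finset α} :
    Isolates M₁ M₂ W k I ↔ IsolatesIn {J | CommonIndep M₁ M₂ J ∧ J.card = k} W I := by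
  simp only [Isolates, IsolatesIn, setW, Set.mem_ofPred_eq, and_imp, and_assoc]

theorem modified_weight_isolates_general {α G : Type*} [DecidableEq α] [AddCommGroup G]
    [LinearOrder G] [IsOrderedAddMonoid G] {F : Set (Finset α)} {E I : Finset α}
    (hF : ∀ J ∈ F, J ⊆ E) {w w' : α → G} {s : α} (hI : IsolatesIn F w I)
    (hw : ∀ x ≠ s, w' x = w x)
    (hmem : s ∈ I → w' s < -∑ x ∈ E.erase s, |w x|)
    (hnotMem : s ∉ I → ∑ x ∈ E.erase s, |w x| < w' s) :
    IsolatesIn F w' I ∧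
    ∀ A B : Finset α, (s ∈ A ↔ s ∈ B) →
      (∑ x ∈ A, w' x ≤ ∑ x ∈ B, w' x ↔ ∑ x ∈ A, w x ≤ ∑ x ∈ B, w x) := by
  refine ⟨⟨hI.1, fun J hJ hne => ?_⟩, fun A B => sum_le_sum_iff_of_eq_off hw⟩
  have hIE := hF I hI.1
  have hJE := hF J hJ
  have habs : ∑ x ∈ E.erase s, |w x| = ∑ x ∈ E.erase s, |w' x| :=
    Finset.sum_congr rfl fun x hx => by rw [hw x (Finset.ne_of_mem_erase hx)]
  rw [habs] at hmem hnotMem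
  by_cases hsIJ : s ∈ I ↔ s ∈ J
  · exact (lt_iff_lt_of_le_iff_le (sum_le_sum_iff_of_eq_off hw hsIJ.symm)).2 (hI.2 J hJ hne)
  · by_cases hsI : s ∈ I
    · have hsJ : s ∉ J := fun hsJ => hsIJ (iff_of_true hsI hsJ)
      exact sum_lt_sum_of_lt_neg_sum_abs hIE hJE hsI hsJ (hmem hsI)
    · have hsJ : s ∈ J := not_not.1 fun hsJ => hsIJ (iff_of_false hsI hsJ)
      exact sum_lt_sum_of_sum_abs_lt hIE hJE hsI hsJ (hnotMem hsI)

/-- Suppose `W` isolates a size-`k` common independent set `I_k`, `s ∈ S`, `b = 1` if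
`s ∈ I_k` and `b = 0` otherwise, and `W′(x) = W(x)` for `x ≠ s` while
`W′(s) = (−1)^b · (1 + Σ_{x ∈ S∖{s}} |W(x)|)`. Then `I_k` is the unique minimum-weight
size-`k` common independent set with respect to `W′`, and for all `S₁, S₂ ⊆ S` with
`s ∈ S₁ ↔ s ∈ S₂`, we have `W′(S₁) ≤ W′(S₂) ↔ W(S₁) ≤ W(S₂)`. -/
theorem modified_weight_isolates {α : Type*} [Fintype α] [DecidableEq α]
    (M₁ M₂ : Matroid α) (hE₁ : M₁.E = Set.univ) (hE₂ : M₂.E = Set.univ)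
    (W : α → ℤ) (k : ℕ) (Ik : Finset α) (hiso : Isolates M₁ M₂ W k Ik)
    (s : α) (b : ℕ) (hb : b = if s ∈ Ik then 1 else 0)
    (W' : α → ℤ)
    (hW' : ∀ x : α, W' x =
      if x = s then (-1 : ℤ) ^ b * (1 + ∑ y ∈ Finset.univ.erase s, |W y|) else W x) :
    Isolates M₁ M₂ W' k Ik ∧
    ∀ S₁ S₂ : Finset α, (s ∈ S₁ ↔ s ∈ S₂) →
      (setW W' S₁ ≤ setW W' S₂ ↔ setW W S₁ ≤ setW W S₂) := by
  simp only [isolates_iff_isolatesIn] at hiso ⊢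
  subst hb
  exact modified_weight_isolates_general (fun J _ => J.subset_univ) hiso
    (fun x hx => by rw [hW', if_neg hx])
    (fun hs => by simp [hW', hs]) (fun hs => by simp [hW', hs])
end

section
/- Let G = (V,E) be a finite directed graph without self-loops and let c ∈ V. Let G′ be the bipartite graph with vertex set V × {0,1} and edge set E₁ ∪ E₂, where E₁ = {{(u,0),(v,1)} : (u,v) ∈ E} and E₂ = {{(v,0),(v,1)} : v ∈ V ∖ {c}}. Then for every perfect matching M of G′, the set of arcs {(u,v) ∈ E : {(u,0),(v,1)} ∈ M} is a union of pairwise vertex-disjoint simple directed cycles of G, and c lies on one of these cycles. -/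
/-- The list of arcs of the closed walk whose vertex list is `l`
(consecutive pairs, wrapping around). -/
def cycleArcs {α : Type*} (l : List α) : List (α × α) := l.zip (l.rotate 1)

/-- `l` is (the vertex list of) a simple directed cycle of the directed graph with arc set
`E`. -/
def IsCycleIn {α : Type*} (E : Finset (α × α)) (l : List α) : Prop :=
  l ≠ [] ∧ l.Nodup ∧ ∀ p ∈ cycleArcs l, p ∈ E

/-!
A perfect matching `f` moves vertices only along arcs of `E`, so the set `s` of vertices `v` with
`(v, f v) ∈ E` is finite and, `f` being injective, mapped into itself: a vertex outside `s` is
fixed, hence cannot be the image of a vertex of `s`. Thus `f` permutes `s`, and its orbits there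
are the required cycles. The vertex `c` lies in `s` because it cannot be matched to itself by an
edge of `E₂`.
-/

open Function

section PeriodicOrbits

variable {α : Type*} {f : α → α} {x v : α} {l : List α}

theorem rotate_one_map_iterate_range_minimalPeriod (f : α → α) (x : α) :
    ((List.range (minimalPeriod f x)).map fun n => f^[n] x).rotate 1 =
      ((List.range (minimalPeriod f x)).map fun n => f^[n] x).map f := by
  refine List.ext_getElem (by simp) fun n _ _ => ?_
  simp only [List.getElem_rotate, List.getElem_map, List.getElem_range, List.length_map,
    List.length_range, iterate_mod_minimalPeriod_eq, iterate_succ_apply']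

theorem rotate_one_eq_map_of_coe_eq_periodicOrbit (h : (l : Cycle α) = periodicOrbit f x) :
    l.rotate 1 = l.map f := by
  obtain ⟨n, rfl⟩ := (Cycle.coe_eq_coe.1 h).symm
  rw [List.rotate_rotate, Nat.add_comm, ← List.rotate_rotate,
    rotate_one_map_iterate_range_minimalPeriod, List.map_rotate]

theorem cycleArcs_eq_map_of_coe_eq_periodicOrbit (h : (l : Cycle α) = periodicOrbit f x) :
    cycleArcs l = l.map fun v => (v, f v) := by
  rw [cycleArcs, rotate_one_eq_map_of_coe_eq_periodicOrbit h]
  simpa only [List.map_id, id] using (List.zip_map' (f := id) (g := f) (l := l))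

theorem periodicOrbit_eq_of_mem (hx : x ∈ periodicPts f) (hv : v ∈ periodicOrbit f x) :
    periodicOrbit f v = periodicOrbit f x := by
  obtain ⟨n, rfl⟩ := (mem_periodicOrbit_iff hx).1 hv
  exact periodicOrbit_apply_iterate_eq hx n

theorem mem_periodicPts_of_mapsTo_of_injOn {s : Set α} (hs : s.Finite) (hmaps : s.MapsTo f s)
    (hinj : s.InjOn f) (hx : x ∈ s) : x ∈ periodicPts f := by
  have : Finite s := hs
  obtain ⟨n, hn, hper⟩ := (hmaps.restrict_inj.2 hinj).mem_periodicPts ⟨x, hx⟩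
  have hsemi : Semiconj Subtype.val (hmaps.restrict f s s) f := fun _ => rfl
  exact mk_mem_periodicPts hn (hper.map hsemi)

/-- A vertex list traversing the cyclic sequence `C`, from an arbitrarily chosen starting point. -/
noncomputable def vertexList (C : Cycle α) : List α :=
  Quotient.out (s := List.IsRotated.setoid α) C

theorem coe_vertexList (C : Cycle α) : (vertexList C : Cycle α) = C :=
  Quotient.out_eq (s := List.IsRotated.setoid α) C

theorem mem_vertexList {C : Cycle α} : v ∈ vertexList C ↔ v ∈ C := by
  rw [← Cycle.mem_coe_iff, coe_vertexList]

end PeriodicOrbits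

section CycleLists

variable {α : Type*} [DecidableEq α] {f : α → α} {v : α} {l : List α} {s : Finset α}

/-- Vertex lists of the periodic orbits of `f` through the points of `s`, one list per orbit. -/
noncomputable def cycleLists (f : α → α) (s : Finset α) : List (List α) :=
  (s.image (periodicOrbit f)).toList.map vertexList

theorem exists_coe_eq_periodicOrbit_of_mem_cycleLists (hl : l ∈ cycleLists f s) :
    ∃ x ∈ s, (l : Cycle α) = periodicOrbit f x := by
  obtain ⟨C, hC, rfl⟩ := List.mem_map.1 hl
  obtain ⟨x, hx, rfl⟩ := Finset.mem_image.1 (Finset.mem_toList.1 hC)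
  exact ⟨x, hx, coe_vertexList _⟩

theorem cycleArcs_eq_map_of_mem_cycleLists (hl : l ∈ cycleLists f s) :
    cycleArcs l = l.map fun v => (v, f v) := by
  obtain ⟨x, -, hlx⟩ := exists_coe_eq_periodicOrbit_of_mem_cycleLists hl
  exact cycleArcs_eq_map_of_coe_eq_periodicOrbit hlx

theorem nodup_of_mem_cycleLists (hl : l ∈ cycleLists f s) : l.Nodup := by
  obtain ⟨x, -, hlx⟩ := exists_coe_eq_periodicOrbit_of_mem_cycleLists hl
  rw [← Cycle.nodup_coe_iff, hlx]
  exact nodup_periodicOrbit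

theorem ne_nil_of_mem_cycleLists (hper : ↑s ⊆ periodicPts f) (hl : l ∈ cycleLists f s) :
    l ≠ [] := by
  obtain ⟨x, hx, hlx⟩ := exists_coe_eq_periodicOrbit_of_mem_cycleLists hl
  rw [Ne, ← Cycle.coe_eq_nil, hlx, periodicOrbit_eq_nil_iff_not_periodic_pt, not_not]
  exact hper hx

theorem pairwise_disjoint_cycleLists (hper : ↑s ⊆ periodicPts f) :
    (cycleLists f s).Pairwise List.Disjoint := by
  refine List.pairwise_map.2 ((Finset.nodup_toList _).imp_of_mem fun hC hD hne v hvC hvD => hne ?_)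
  obtain ⟨x, hx, rfl⟩ := Finset.mem_image.1 (Finset.mem_toList.1 hC)
  obtain ⟨y, hy, rfl⟩ := Finset.mem_image.1 (Finset.mem_toList.1 hD)
  rw [mem_vertexList] at hvC hvD
  exact (periodicOrbit_eq_of_mem (hper hx) hvC).symm.trans (periodicOrbit_eq_of_mem (hper hy) hvD)

theorem exists_mem_cycleLists_iff (hper : ↑s ⊆ periodicPts f) (hmaps : Set.MapsTo f s s) :
    (∃ l ∈ cycleLists f s, v ∈ l) ↔ v ∈ s := by
  constructor
  · rintro ⟨l, hl, hv⟩
    obtain ⟨x, hx, hlx⟩ := exists_coe_eq_periodicOrbit_of_mem_cycleLists hl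
    rw [← Cycle.mem_coe_iff, hlx, mem_periodicOrbit_iff (hper hx)] at hv
    obtain ⟨n, rfl⟩ := hv
    exact hmaps.iterate n hx
  · intro hv
    exact ⟨vertexList (periodicOrbit f v),
      List.mem_map_of_mem (Finset.mem_toList.2 (Finset.mem_image_of_mem _ hv)),
      mem_vertexList.2 (self_mem_periodicOrbit (hper hv))⟩

theorem mem_flatMap_cycleArcs_cycleLists_iff (hper : ↑s ⊆ periodicPts f)
    (hmaps : Set.MapsTo f s s) {p : α × α} :
    p ∈ (cycleLists f s).flatMap cycleArcs ↔ p.1 ∈ s ∧ f p.1 = p.2 := by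
  rw [List.mem_flatMap, ← exists_mem_cycleLists_iff hper hmaps]
  constructor
  · rintro ⟨l, hl, hp⟩
    rw [cycleArcs_eq_map_of_mem_cycleLists hl] at hp
    obtain ⟨v, hv, rfl⟩ := List.mem_map.1 hp
    exact ⟨⟨l, hl, hv⟩, rfl⟩
  · rintro ⟨⟨l, hl, hv⟩, hp⟩
    refine ⟨l, hl, ?_⟩
    rw [cycleArcs_eq_map_of_mem_cycleLists hl]
    exact List.mem_map.2 ⟨p.1, hv, Prod.ext rfl hp⟩

theorem isCycleIn_of_mem_cycleLists {E : Finset (α × α)} (hper : ↑s ⊆ periodicPts f)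
    (hmaps : Set.MapsTo f s s) (hE : ∀ v ∈ s, (v, f v) ∈ E) (hl : l ∈ cycleLists f s) :
    IsCycleIn E l := by
  refine ⟨ne_nil_of_mem_cycleLists hper hl, nodup_of_mem_cycleLists hl, fun p hp => ?_⟩
  obtain ⟨hps, hpf⟩ :=
    (mem_flatMap_cycleArcs_cycleLists_iff hper hmaps).1 (List.mem_flatMap.2 ⟨l, hl, hp⟩)
  have hpE : (p.1, f p.1) ∈ E := hE p.1 hps
  rwa [hpf] at hpE

end CycleLists

section ArcSources

variable {α : Type*} [DecidableEq α] {E : Finset (α × α)} {f : α → α}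

/-- The vertices `v` that the matching `f` matches along an arc `(v, f v)` of `E`, rather than to
their own copy. -/
def arcSources (E : Finset (α × α)) (f : α → α) : Finset α :=
  (E.filter fun p => f p.1 = p.2).image Prod.fst

theorem mem_arcSources {v : α} : v ∈ arcSources E f ↔ (v, f v) ∈ E := by
  simp [arcSources]

theorem mapsTo_arcSources (hinj : Injective f) (hfix : ∀ v, (v, f v) ∈ E ∨ f v = v) :
    Set.MapsTo f (arcSources E f) (arcSources E f) := by
  intro v hv
  simp only [Finset.mem_coe, mem_arcSources] at hv ⊢
  rcases hfix (f v) with hE | hffv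
  · exact hE
  · have hfv : f v = v := hinj hffv
    rwa [hfv]

end ArcSources

theorem perfect_matching_gives_disjoint_cycles_general {α : Type*} [DecidableEq α]
    (E : Finset (α × α)) (c : α) {f : α → α}
    (hinj : Injective f) (hf : ∀ v : α, (v, f v) ∈ E ∨ (f v = v ∧ v ≠ c)) :
    ∃ Cs : List (List α),
      (∀ l ∈ Cs, IsCycleIn E l) ∧
      (Cs.Pairwise fun l₁ l₂ => ∀ v : α, v ∈ l₁ → v ∉ l₂) ∧
      (E.filter fun p => f p.1 = p.2) = (Cs.flatMap cycleArcs).toFinset ∧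
      ∃ l ∈ Cs, c ∈ l := by
  have hmaps : Set.MapsTo f (arcSources E f) (arcSources E f) :=
    mapsTo_arcSources hinj fun v => (hf v).imp_right And.left
  have hper : ↑(arcSources E f) ⊆ periodicPts f := fun _ =>
    mem_periodicPts_of_mapsTo_of_injOn (Finset.finite_toSet _) hmaps hinj.injOn
  have hc : c ∈ arcSources E f := mem_arcSources.2 ((hf c).resolve_right fun h => h.2 rfl)
  refine ⟨cycleLists f (arcSources E f),
    fun l => isCycleIn_of_mem_cycleLists hper hmaps fun v => mem_arcSources.1,
    (pairwise_disjoint_cycleLists hper).imp fun h v => @h v, ?_,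
    (exists_mem_cycleLists_iff hper hmaps).2 hc⟩
  ext ⟨u, v⟩
  rw [Finset.mem_filter, List.mem_toFinset, mem_flatMap_cycleArcs_cycleLists_iff hper hmaps,
    mem_arcSources]
  exact and_congr_left fun huv : f u = v => by rw [huv]

/-- Let `G = (V,E)` be a finite directed graph without self-loops and `c ∈ V`. Consider the
bipartite graph `G′` on `V × {0,1}` with edges `{(u,0),(v,1)}` for `(u,v) ∈ E` and
`{(v,0),(v,1)}` for `v ≠ c`; a perfect matching of `G′` is a bijection `f : V → V` with
`{(v,0),(f v,1)}` an edge of `G′` for every `v`. Then for every perfect matching `f`, the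
arc set `{(u,v) ∈ E : {(u,0),(v,1)} ∈ M}` is a union of pairwise vertex-disjoint simple
directed cycles of `G`, and `c` lies on one of these cycles. -/
theorem perfect_matching_gives_disjoint_cycles {α : Type*} [Fintype α] [DecidableEq α]
    (E : Finset (α × α)) (hloop : ∀ v : α, (v, v) ∉ E) (c : α)
    (f : α ≃ α) (hf : ∀ v : α, (v, f v) ∈ E ∨ (f v = v ∧ v ≠ c)) :
    ∃ Cs : List (List α),
      (∀ l ∈ Cs, IsCycleIn E l) ∧
      (Cs.Pairwise fun l₁ l₂ => ∀ v : α, v ∈ l₁ → v ∉ l₂) ∧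
      (E.filter fun p => f p.1 = p.2) = (Cs.flatMap cycleArcs).toFinset ∧
      ∃ l ∈ Cs, c ∈ l :=
  perfect_matching_gives_disjoint_cycles_general E c f.injective hf
end

section
/- Let G = (V,E) be a finite directed graph without self-loops, with edge weights Wt : E → ℤ such that every directed cycle of G has nonnegative weight, let c ∈ V, let n = |V|, and suppose G contains a directed cycle through c. Let G′ be the bipartite graph with vertex set V × {0,1} and edge set E₁ ∪ E₂, where E₁ = {{(u,0),(v,1)} : (u,v) ∈ E} and E₂ = {{(v,0),(v,1)} : v ∈ V ∖ {c}}, with edge weights w′({(u,0),(v,1)}) = Wt((u,v))·(n+1) + 1 for (u,v) ∈ E and w′(e) = 0 for e ∈ E₂. Then G′ has a perfect matching, and for every minimum-weight perfect matching M of G′, the set of arcs {(u,v) ∈ E : {(u,0),(v,1)} ∈ M} is a single simple directed cycle through c which has minimum weight among all directed cycles of G through c, and which has the minimum number of edges among the directed cycles through c of minimum weight. -/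
/-- The weight of a perfect matching `f` of the bipartite graph `G′`: the edge
`{(u,0),(v,1)}` with `(u,v) ∈ E` has weight `Wt(u,v)·(n+1) + 1`, and the edges
`{(v,0),(v,1)}` have weight `0`. -/
def matchingWeight {α : Type*} [Fintype α] [DecidableEq α]
    (E : Finset (α × α)) (Wt : α × α → ℤ) (f : α ≃ α) : ℤ :=
  ∑ v : α, if (v, f v) ∈ E then Wt (v, f v) * ((Fintype.card α : ℤ) + 1) + 1 else 0

/-!
A perfect matching of `G′` is a permutation of `V` that moves `c` and whose moved points follow
arcs of `G`, and its weight is the sum over the moved points `v` of `w′(v, f v)`, where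
`w′ = Wt · (n + 1) + 1`. A cycle of weight `W ≥ 0` and length `0 < k ≤ n` has positive
`w′`-weight `W (n + 1) + k`, which orders the pairs `(W, k)` lexicographically. The permutation is a
disjoint product of cycles of `G`, and dropping any of them but the cycle through `c` decreases the
`w′`-weight: a minimum matching is a single cycle through `c`, of minimum `w′`-weight.
-/

section Cycles

variable {α : Type*} {E : Finset (α × α)} {l : List α}

theorem length_cycleArcs (l : List α) : (cycleArcs l).length = l.length := by
  simp [cycleArcs]

theorem IsCycleIn.ne_singleton (hl : IsCycleIn E l) (hloop : ∀ v, (v, v) ∉ E) (v : α) :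
    l ≠ [v] := by
  rintro rfl
  exact hloop v (hl.2.2 (v, v) (by simp [cycleArcs]))

variable [DecidableEq α]

theorem cycleArcs_eq_map_formPerm (hl : l.Nodup) :
    cycleArcs l = l.map fun v => (v, l.formPerm v) := by
  refine List.ext_getElem (by simp [cycleArcs]) fun i _ hi => ?_
  have hi : i < l.length := by simpa using hi
  simp [cycleArcs, List.getElem_rotate, List.formPerm_apply_getElem l hl i hi]

theorem mem_cycleArcs_iff (hl : l.Nodup) {u v : α} :
    (u, v) ∈ cycleArcs l ↔ u ∈ l ∧ l.formPerm u = v := by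
  simp [cycleArcs_eq_map_formPerm hl]

theorem IsCycleIn.formPerm_apply_ne_self (hl : IsCycleIn E l) (hloop : ∀ v, (v, v) ∉ E) {v : α}
    (hv : v ∈ l) : l.formPerm v ≠ v := fun h =>
  hloop v (hl.2.2 _ ((mem_cycleArcs_iff hl.2.1).2 ⟨hv, h⟩))

theorem IsCycleIn.filter_formPerm_eq (hl : IsCycleIn E l) (hloop : ∀ v, (v, v) ∉ E) :
    (E.filter fun p => l.formPerm p.1 = p.2) = (cycleArcs l).toFinset := by
  ext ⟨u, v⟩
  rw [Finset.mem_filter, List.mem_toFinset]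
  constructor
  · rintro ⟨hE, rfl : l.formPerm u = v⟩
    have hu : l.formPerm u ≠ u := fun hu => hloop u (by rwa [hu] at hE)
    exact (mem_cycleArcs_iff hl.2.1).2 ⟨List.mem_of_formPerm_apply_ne hu, rfl⟩
  · exact fun h => ⟨hl.2.2 _ h, ((mem_cycleArcs_iff hl.2.1).1 h).2⟩

end Cycles

/-- Every point that the permutation `σ` moves is moved along an arc of `E`. This encodes a family
of vertex-disjoint directed cycles, the points off the family being fixed by `σ`. -/
def MovesAlong {α : Type*} (E : Finset (α × α)) (σ : Equiv.Perm α) : Prop :=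
  ∀ v, σ v ≠ v → (v, σ v) ∈ E

namespace MovesAlong

variable {α : Type*} {E : Finset (α × α)} {σ τ : Equiv.Perm α}

theorem left_of_disjoint_mul (hd : σ.Disjoint τ) (h : MovesAlong E (σ * τ)) : MovesAlong E σ := by
  intro v hv
  have hτ : τ v = v := (hd v).resolve_left hv
  simpa [hτ, hv] using h v

theorem right_of_disjoint_mul (hd : σ.Disjoint τ) (h : MovesAlong E (σ * τ)) : MovesAlong E τ :=
  left_of_disjoint_mul hd.symm (hd.commute.eq ▸ h)

theorem isCycleIn_toList [Fintype α] [DecidableEq α] (h : MovesAlong E σ) {x : α} (hx : σ x ≠ x) :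
    IsCycleIn E (σ.toList x) := by
  have hnodup := Equiv.Perm.nodup_toList σ x
  refine ⟨by simpa using hx, hnodup, fun ⟨u, v⟩ huv => ?_⟩
  obtain ⟨hu, rfl⟩ := (mem_cycleArcs_iff hnodup).1 huv
  have hxu : σ.SameCycle x u := (Equiv.Perm.mem_toList_iff.1 hu).1
  rw [Equiv.Perm.formPerm_toList, hxu.cycleOf_apply]
  exact h u fun hu => hx (hxu.apply_eq_self_iff.2 hu)

end MovesAlong

theorem IsCycleIn.movesAlong_formPerm {α : Type*} [DecidableEq α] {E : Finset (α × α)} {l : List α}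
    (hl : IsCycleIn E l) : MovesAlong E l.formPerm := fun _ hv =>
  hl.2.2 _ ((mem_cycleArcs_iff hl.2.1).2 ⟨List.mem_of_formPerm_apply_ne hv, rfl⟩)

/-- The total weight, under the arc weights `w`, of the arcs `(v, σ v)` leaving the points that the
permutation `σ` moves, that is, the sum of the weights of its nontrivial cycles. -/
def permWeight {α M : Type*} [Fintype α] [DecidableEq α] [AddCommMonoid M] (w : α × α → M)
    (σ : Equiv.Perm α) : M :=
  ∑ v ∈ σ.support, w (v, σ v)

section PermWeight

variable {α M : Type*} [Fintype α] [DecidableEq α] [AddCommMonoid M] (w : α × α → M)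

theorem permWeight_one : permWeight w 1 = 0 := by
  simp [permWeight]

theorem permWeight_mul {σ τ : Equiv.Perm α} (h : σ.Disjoint τ) :
    permWeight w (σ * τ) = permWeight w σ + permWeight w τ := by
  rw [permWeight, h.support_mul, Finset.sum_union h.disjoint_support]
  refine congrArg₂ _ (Finset.sum_congr rfl fun v hv => ?_) (Finset.sum_congr rfl fun v hv => ?_)
  · rw [Equiv.Perm.mul_apply, (h v).resolve_left (Equiv.Perm.mem_support.1 hv)]
  · rw [h.commute.eq, Equiv.Perm.mul_apply, (h v).resolve_right (Equiv.Perm.mem_support.1 hv)]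

theorem permWeight_formPerm {l : List α} (hl : l.Nodup) (hne : ∀ v, l ≠ [v]) :
    permWeight w l.formPerm = ((cycleArcs l).map w).sum := by
  rw [permWeight, List.support_formPerm_of_nodup l hl hne, List.sum_toFinset _ hl,
    cycleArcs_eq_map_formPerm hl, List.map_map, Function.comp_def]

theorem permWeight_cycleOf (σ : Equiv.Perm α) (x : α) :
    permWeight w (σ.cycleOf x) = ((cycleArcs (σ.toList x)).map w).sum := by
  rw [← permWeight_formPerm w (σ.nodup_toList x) (σ.toList_ne_singleton x),
    Equiv.Perm.formPerm_toList]

end PermWeight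

section PositiveCycles

variable {α M : Type*} [Fintype α] [DecidableEq α] [AddCommMonoid M] [PartialOrder M]
  {E : Finset (α × α)} {w : α × α → M}

theorem MovesAlong.permWeight_pos [IsOrderedAddMonoid M]
    (hw : ∀ l, IsCycleIn E l → 0 < ((cycleArcs l).map w).sum)
    {σ : Equiv.Perm α} (hσ : MovesAlong E σ) (hne : σ ≠ 1) : 0 < permWeight w σ := by
  induction σ using Equiv.Perm.cycle_induction_on with
  | base_one => exact absurd rfl hne
  | base_cycles σ hcycle =>
    have ⟨x, hx, _⟩ := hcycle
    rw [← hcycle.cycleOf_eq hx, permWeight_cycleOf]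
    exact hw _ (hσ.isCycleIn_toList hx)
  | induction_disjoint σ τ hd hcycle hpos_left hpos_right =>
    have hτ_nonneg : 0 ≤ permWeight w τ := by
      rcases eq_or_ne τ 1 with rfl | hτ
      · exact (permWeight_one w).ge
      · exact (hpos_right (hσ.right_of_disjoint_mul hd) hτ).le
    rw [permWeight_mul w hd]
    exact add_pos_of_pos_of_nonneg
      (hpos_left (hσ.left_of_disjoint_mul hd) hcycle.ne_one) hτ_nonneg

theorem MovesAlong.cycleOf_eq_of_permWeight_le [IsOrderedCancelAddMonoid M]
    (hw : ∀ l, IsCycleIn E l → 0 < ((cycleArcs l).map w).sum)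
    {σ : Equiv.Perm α} (hσ : MovesAlong E σ) {x : α} (hx : σ x ≠ x)
    (hle : permWeight w σ ≤ permWeight w (σ.cycleOf x)) : σ.cycleOf x = σ := by
  set ρ := σ * (σ.cycleOf x)⁻¹
  have hd : ρ.Disjoint (σ.cycleOf x) :=
    Equiv.Perm.disjoint_mul_inv_of_mem_cycleFactorsFinset
      (Equiv.Perm.cycleOf_mem_cycleFactorsFinset_iff.2 (Equiv.Perm.mem_support.2 hx))
  have hmul : ρ * σ.cycleOf x = σ := inv_mul_cancel_right _ _
  have hρ_le : permWeight w ρ ≤ 0 := by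
    rwa [← hmul, permWeight_mul w hd, hmul, add_le_iff_nonpos_left] at hle
  have hρ_one : ρ = 1 := by
    by_contra hne
    have hρ_along : MovesAlong E ρ := MovesAlong.left_of_disjoint_mul hd (hmul.symm ▸ hσ)
    exact (hρ_along.permWeight_pos hw hne).not_ge hρ_le
  rwa [hρ_one, one_mul] at hmul

theorem MovesAlong.exists_formPerm_eq_of_minimal [IsOrderedCancelAddMonoid M]
    (hw : ∀ l, IsCycleIn E l → 0 < ((cycleArcs l).map w).sum)
    {σ : Equiv.Perm α} (hσ : MovesAlong E σ) {x : α} (hx : σ x ≠ x)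
    (hmin : ∀ τ, MovesAlong E τ → τ x ≠ x → permWeight w σ ≤ permWeight w τ) :
    ∃ l, IsCycleIn E l ∧ x ∈ l ∧ l.formPerm = σ := by
  have hl := hσ.isCycleIn_toList hx
  refine ⟨σ.toList x, hl, Equiv.Perm.mem_toList_iff.2 ⟨.refl σ x, Equiv.Perm.mem_support.2 hx⟩, ?_⟩
  have hcycle : MovesAlong E (σ.cycleOf x) := by
    simpa only [Equiv.Perm.formPerm_toList] using hl.movesAlong_formPerm
  rw [Equiv.Perm.formPerm_toList]
  exact hσ.cycleOf_eq_of_permWeight_le hw hx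
    (hmin _ hcycle (by rwa [Equiv.Perm.cycleOf_apply_self]))

end PositiveCycles

theorem forall_mem_or_fixed_iff_movesAlong {α : Type*} {E : Finset (α × α)}
    (hloop : ∀ v, (v, v) ∉ E) {c : α} {f : α ≃ α} :
    (∀ v, (v, f v) ∈ E ∨ (f v = v ∧ v ≠ c)) ↔ MovesAlong E f ∧ f c ≠ c := by
  constructor
  · refine fun h => ⟨fun v hv => (h v).resolve_right fun hfix => hv hfix.1, fun hc => ?_⟩
    have harc : (c, f c) ∈ E := (h c).resolve_right fun hfix => hfix.2 rfl
    exact hloop c (by rwa [hc] at harc)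
  · rintro ⟨h, hc⟩ v
    rcases eq_or_ne (f v) v with hv | hv
    · exact Or.inr ⟨hv, fun hvc => hc (hvc ▸ hv)⟩
    · exact Or.inl (h v hv)

/-- The weight `w′` of the edges of `G′` that come from arcs of `G`: scaling by more than `|V|`
leaves room to count arcs without disturbing the order of the original weights. -/
def scaledWeight {α : Type*} [Fintype α] (Wt : α × α → ℤ) (p : α × α) : ℤ :=
  Wt p * ((Fintype.card α : ℤ) + 1) + 1

section ScaledWeight

variable {α : Type*} [Fintype α] {E : Finset (α × α)} {Wt : α × α → ℤ}

theorem sum_map_scaledWeight (Wt : α × α → ℤ) (s : List (α × α)) :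
    (s.map (scaledWeight Wt)).sum = (s.map Wt).sum * ((Fintype.card α : ℤ) + 1) + s.length := by
  induction s with
  | nil => simp
  | cons p s ih =>
    simp only [List.map_cons, List.sum_cons, List.length_cons, ih, scaledWeight]
    push_cast
    ring

theorem IsCycleIn.sum_map_scaledWeight_pos {l : List α} (hl : IsCycleIn E l)
    (hWt : 0 ≤ ((cycleArcs l).map Wt).sum) : 0 < ((cycleArcs l).map (scaledWeight Wt)).sum := by
  have hlen : 0 < l.length := List.length_pos_of_ne_nil hl.1
  rw [sum_map_scaledWeight, length_cycleArcs]
  positivity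

theorem matchingWeight_eq_permWeight_scaledWeight [DecidableEq α] (hloop : ∀ v, (v, v) ∉ E)
    {f : α ≃ α} (hf : MovesAlong E f) :
    matchingWeight E Wt f = permWeight (scaledWeight Wt) f := by
  rw [matchingWeight, permWeight, ← Finset.sum_filter]
  refine Finset.sum_congr (Finset.ext fun v => ?_) fun _ _ => rfl
  rw [Finset.mem_filter_univ, Equiv.Perm.mem_support]
  exact ⟨fun hE hv => hloop v (by rwa [hv] at hE), hf v⟩

end ScaledWeight

theorem lex_le_of_mul_add_le {a b : ℤ} {n s t : ℕ} (ht : t ≤ n)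
    (h : a * ((n : ℤ) + 1) + s ≤ b * ((n : ℤ) + 1) + t) : a ≤ b ∧ (b = a → s ≤ t) := by
  refine ⟨?_, by rintro rfl; omega⟩
  by_contra! hlt
  have : (b + 1) * ((n : ℤ) + 1) ≤ a * ((n : ℤ) + 1) := by gcongr; omega
  linarith

/-- Let `G = (V,E)` be a finite loopless directed graph with edge weights `Wt` whose
directed cycles all have nonnegative weight, let `c ∈ V`, `n = |V|`, and suppose `G` has a
directed cycle through `c`. Consider the bipartite graph `G′` on `V × {0,1}` with edges
`{(u,0),(v,1)}` of weight `Wt(u,v)·(n+1)+1` for `(u,v) ∈ E` and edges `{(v,0),(v,1)}` of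
weight `0` for `v ≠ c`; a perfect matching of `G′` is a bijection `f : V → V` with
`{(v,0),(f v,1)}` an edge of `G′` for every `v`. Then `G′` has a perfect matching, and for
every minimum-weight perfect matching `f` of `G′`, the arc set
`{(u,v) ∈ E : {(u,0),(v,1)} ∈ M}` is a single simple directed cycle through `c`, of
minimum weight among the directed cycles of `G` through `c`, with the minimum number of
edges among the minimum-weight directed cycles through `c`. -/
theorem min_matching_gives_min_cycle {α : Type*} [Fintype α] [DecidableEq α]
    (E : Finset (α × α)) (hloop : ∀ v : α, (v, v) ∉ E)
    (Wt : α × α → ℤ) (c : α)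
    (hcyc : ∀ l : List α, IsCycleIn E l → 0 ≤ ((cycleArcs l).map Wt).sum)
    (hex : ∃ l : List α, IsCycleIn E l ∧ c ∈ l) :
    (∃ f : α ≃ α, ∀ v : α, (v, f v) ∈ E ∨ (f v = v ∧ v ≠ c)) ∧
    ∀ f : α ≃ α, (∀ v : α, (v, f v) ∈ E ∨ (f v = v ∧ v ≠ c)) →
      (∀ g : α ≃ α, (∀ v : α, (v, g v) ∈ E ∨ (g v = v ∧ v ≠ c)) →
        matchingWeight E Wt f ≤ matchingWeight E Wt g) →
      ∃ l : List α, IsCycleIn E l ∧ c ∈ l ∧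
        (E.filter fun p => f p.1 = p.2) = (cycleArcs l).toFinset ∧
        (∀ l' : List α, IsCycleIn E l' → c ∈ l' →
          ((cycleArcs l).map Wt).sum ≤ ((cycleArcs l').map Wt).sum) ∧
        (∀ l' : List α, IsCycleIn E l' → c ∈ l' →
          ((cycleArcs l').map Wt).sum = ((cycleArcs l).map Wt).sum →
          l.length ≤ l'.length) := by
  simp only [forall_mem_or_fixed_iff_movesAlong hloop]
  have hcover : ∀ l, IsCycleIn E l → c ∈ l → MovesAlong E l.formPerm ∧ l.formPerm c ≠ c :=
    fun l hl hc => ⟨hl.movesAlong_formPerm, hl.formPerm_apply_ne_self hloop hc⟩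
  refine ⟨hex.elim fun l ⟨hl, hc⟩ => ⟨l.formPerm, hcover l hl hc⟩, fun f ⟨hf, hfc⟩ hmin => ?_⟩
  have hmin_perm : ∀ g, MovesAlong E g → g c ≠ c →
      permWeight (scaledWeight Wt) f ≤ permWeight (scaledWeight Wt) g := fun g hg hgc => by
    simpa only [matchingWeight_eq_permWeight_scaledWeight hloop hf,
      matchingWeight_eq_permWeight_scaledWeight hloop hg] using hmin g ⟨hg, hgc⟩
  obtain ⟨l, hl, hc, rfl⟩ := hf.exists_formPerm_eq_of_minimal
    (fun l hl => hl.sum_map_scaledWeight_pos (hcyc l hl)) hfc hmin_perm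
  have hlex : ∀ l', IsCycleIn E l' → c ∈ l' →
      ((cycleArcs l).map Wt).sum ≤ ((cycleArcs l').map Wt).sum ∧
        (((cycleArcs l').map Wt).sum = ((cycleArcs l).map Wt).sum → l.length ≤ l'.length) := by
    intro l' hl' hc'
    have hle := hmin_perm l'.formPerm (hcover l' hl' hc').1 (hcover l' hl' hc').2
    simp only [permWeight_formPerm _ hl.2.1 (hl.ne_singleton hloop),
      permWeight_formPerm _ hl'.2.1 (hl'.ne_singleton hloop), sum_map_scaledWeight,
      length_cycleArcs] at hle
    exact lex_le_of_mul_add_le hl'.2.1.length_le_card hle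
  exact ⟨l, hl, hc, hl.filter_formPerm_eq hloop, fun l' hl' hc' => (hlex l' hl' hc').1,
    fun l' hl' hc' => (hlex l' hl' hc').2⟩
end

section
/- Let 𝔽 be a field, let m, n ∈ ℕ, let k ≤ m, and let L₁ and L₂ be m × n matrices over 𝔽 with columns indexed by a set S of size n. For 1 ≤ i ≤ m and 1 ≤ j ≤ m−k, write s_{ij} = (i−1)(m−k)+j. Let C be the m × m(m−k) matrix whose s_{ij}-th column is the i-th standard basis vector of 𝔽^m, and let D be the (m−k) × m(m−k) matrix whose s_{ij}-th column is the j-th standard basis vector of 𝔽^{m−k}. Define the (2m−k) × (n + 2m(m−k)) block matrices L₁′ = [[L₁, C, 0],[0, 0, D]] and L₂′ = [[L₂, 0, C],[0, D, 0]], with columns indexed by S ∪ A ∪ B, where A indexes the middle block of m(m−k) columns and B the last block. Let W : S → ℤ and suppose there is a unique minimum-weight set I_k among the size-k subsets of S that are doubly independent for (L₁,L₂). Define W′ : S ∪ A ∪ B → ℤ by W′(e) = 10m⁴·W(e) for e ∈ S, and W′(e) = i·j for the element of A or B corresponding to column s_{ij}. Then there is a unique minimum-W′-weight set I among the subsets of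 S ∪ A ∪ B of cardinality 2m − k that are doubly independent for (L₁′,L₂′), and it satisfies I ∩ S = I_k. -/
/-- A set `I` of column indices is doubly independent for the pair of matrices `(A, B)` if
the corresponding columns of `A` are linearly independent and the corresponding columns of
`B` are linearly independent. -/
def DoublyIndep (𝔽 : Type*) [Field 𝔽] {ρ ι : Type*} (A B : Matrix ρ ι 𝔽)
    (I : Finset ι) : Prop :=
  LinearIndependent 𝔽 (fun i : I => A.transpose i.1) ∧
  LinearIndependent 𝔽 (fun i : I => B.transpose i.1)

/-- The weight of a set of indices under a weight function. -/
def wsum {ι : Type*} (W : ι → ℤ) (I : Finset ι) : ℤ := ∑ x ∈ I, W x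

/-- The `m × m(m−k)` matrix `C` whose `s_{ij}`-th column (`s_{ij} = (i−1)(m−k)+j`,
`0`-indexed: column `a` with `i = a / (m−k)`) is the `i`-th standard basis vector of
`𝔽^m`. -/
def Cmat (𝔽 : Type*) [Field 𝔽] (m k : ℕ) : Matrix (Fin m) (Fin (m * (m - k))) 𝔽 :=
  Matrix.of fun p q => if (p : ℕ) = (q : ℕ) / (m - k) then 1 else 0

/-- The `(m−k) × m(m−k)` matrix `D` whose `s_{ij}`-th column (`0`-indexed: column `a` with
`j = a % (m−k)`) is the `j`-th standard basis vector of `𝔽^{m−k}`. -/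
def Dmat (𝔽 : Type*) [Field 𝔽] (m k : ℕ) : Matrix (Fin (m - k)) (Fin (m * (m - k))) 𝔽 :=
  Matrix.of fun r q => if (r : ℕ) = (q : ℕ) % (m - k) then 1 else 0

/-- The block matrix `L₁′ = [[L₁, C, 0],[0, 0, D]]`, with columns indexed by `S ⊕ (A ⊕ B)`. -/
def L1aug (𝔽 : Type*) [Field 𝔽] (m n k : ℕ) (L : Matrix (Fin m) (Fin n) 𝔽) :
    Matrix (Fin m ⊕ Fin (m - k)) (Fin n ⊕ (Fin (m * (m - k)) ⊕ Fin (m * (m - k)))) 𝔽 :=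
  Matrix.of fun p q =>
    match p, q with
    | Sum.inl p, Sum.inl s => L p s
    | Sum.inl p, Sum.inr (Sum.inl a) => Cmat 𝔽 m k p a
    | Sum.inl _, Sum.inr (Sum.inr _) => 0
    | Sum.inr _, Sum.inl _ => 0
    | Sum.inr _, Sum.inr (Sum.inl _) => 0
    | Sum.inr r, Sum.inr (Sum.inr b) => Dmat 𝔽 m k r b

/-- The block matrix `L₂′ = [[L₂, 0, C],[0, D, 0]]`, with columns indexed by `S ⊕ (A ⊕ B)`. -/
def L2aug (𝔽 : Type*) [Field 𝔽] (m n k : ℕ) (L : Matrix (Fin m) (Fin n) 𝔽) :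
    Matrix (Fin m ⊕ Fin (m - k)) (Fin n ⊕ (Fin (m * (m - k)) ⊕ Fin (m * (m - k)))) 𝔽 :=
  Matrix.of fun p q =>
    match p, q with
    | Sum.inl p, Sum.inl s => L p s
    | Sum.inl _, Sum.inr (Sum.inl _) => 0
    | Sum.inl p, Sum.inr (Sum.inr b) => Cmat 𝔽 m k p b
    | Sum.inr _, Sum.inl _ => 0
    | Sum.inr r, Sum.inr (Sum.inl a) => Dmat 𝔽 m k r a
    | Sum.inr _, Sum.inr (Sum.inr _) => 0


/-- The weight function `W′` on `S ⊕ (A ⊕ B)`: `W′(e) = 10m⁴·W(e)` for `e ∈ S`, and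
`W′(e) = i·j` for the element of `A` or `B` corresponding to column `s_{ij}`
(`0`-indexed column `a`: `i = a/(m−k) + 1`, `j = a%(m−k) + 1`). -/
def Waug (m n k : ℕ) (W : Fin n → ℤ) :
    Fin n ⊕ (Fin (m * (m - k)) ⊕ Fin (m * (m - k))) → ℤ
  | Sum.inl e => 10 * (m : ℤ) ^ 4 * W e
  | Sum.inr (Sum.inl a) => (((a : ℕ) / (m - k) + 1) * ((a : ℕ) % (m - k) + 1) : ℕ)
  | Sum.inr (Sum.inr b) => (((b : ℕ) / (m - k) + 1) * ((b : ℕ) % (m - k) + 1) : ℕ)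

/-!
View `A` and `B` as two copies of an `m × (m - k)` grid. A doubly independent set of size `2m - k`
splits as `K ∪ A ∪ B`, and counting ranks forces `|K| = k` and `|A| = |B| = m - k`. Then `A` has
exactly one cell in each column of the grid, so it is the graph of a function `f` from columns to
rows, and independence says that the standard basis vectors `e_{f j}` form a basis of `𝔽^m` modulo
the columns of `L₁` indexed by `K`; likewise for `B` and `L₂`. The weight of such a graph is the
sum of the `i * j` over its cells `(i, j)`.

The cheapest such `f` is unique. If `f i < f j` for some `i < j`, swapping these two values lowers
the cost, so a minimizer is strictly decreasing and hence determined by its range. If two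
minimizers had different ranges, the least row in exactly one of them could be exchanged into the
other basis in place of a larger row, which again lowers the cost.
-/

section Assignment

variable {R J ι : Type*} [Fintype J] [Ring R]

/-- The total cost `∑ⱼ c (f j) * w j` of assigning to every position `j`, of weight `w j`,
an item `f j`, of cost `c (f j)`. -/
def assignmentCost (c : ι → R) (w : J → R) (f : J → ι) : R := ∑ j, c (f j) * w j

variable [PartialOrder R] [IsStrictOrderedRing R] [DecidableEq J] {c : ι → R} {w : J → R}

lemma assignmentCost_update_lt {f : J → ι} {j : J} {x : ι} (hw : 0 < w j) (hc : c x < c (f j)) :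
    assignmentCost c w (Function.update f j x) < assignmentCost c w f := by
  have hj : c x * w j < c (f j) * w j := mul_lt_mul_of_pos_right hc hw
  refine Finset.sum_lt_sum (fun l _ ↦ ?_) ⟨j, Finset.mem_univ j, by simpa using hj⟩
  obtain rfl | hl := eq_or_ne l j
  · simpa using hj.le
  · simp [hl]

lemma assignmentCost_comp_swap_lt {f : J → ι} {i j : J} (hw : w i < w j)
    (hc : c (f i) < c (f j)) :
    assignmentCost c w (f ∘ Equiv.swap i j) < assignmentCost c w f := by
  have hij : i ≠ j := fun h ↦ hw.ne (congrArg w h)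
  rw [← sub_neg, assignmentCost, assignmentCost, ← Finset.sum_sub_distrib,
    Fintype.sum_eq_add i j hij fun l hl ↦ by simp [Equiv.swap_apply_of_ne_of_ne hl.1 hl.2]]
  simp only [Function.comp_apply, Equiv.swap_apply_left, Equiv.swap_apply_right]
  rw [sub_add_sub_comm, sub_neg, add_comm]
  exact mul_add_mul_lt_mul_add_mul hc hw

end Assignment

section MinimumCostBasis

variable {𝔽 V ι J : Type*} [DivisionRing 𝔽] [AddCommGroup V] [Module 𝔽 V] {v : ι → V} {f g : J → ι}

lemma linearIndependent_update_of_notMem_span [DecidableEq J] {b : J → V} {j : J}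
    {x : V} (hb : LinearIndependent 𝔽 b) (hx : x ∉ Submodule.span 𝔽 (b '' {j}ᶜ)) :
    LinearIndependent 𝔽 (Function.update b j x) := by
  have hcongr : Set.EqOn b (Function.update b j x) {j}ᶜ := fun l hl ↦
    (Function.update_of_ne hl x b).symm
  have huniv : insert j {j}ᶜ = (Set.univ : Set J) := by simp [Set.insert_eq]
  rw [← linearIndepOn_univ_iff, ← huniv, linearIndepOn_insert (by simp),
    Function.update_self, ← Set.image_congr hcongr]
  exact ⟨(hb.linearIndepOn _).congr hcongr, hx⟩

lemma finrank_quotient_span_image_add_card [FiniteDimensional 𝔽 V] {K : Finset ι}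
    (hK : LinearIndepOn 𝔽 v K) :
    Module.finrank 𝔽 (V ⧸ Submodule.span 𝔽 (v '' K)) + K.card = Module.finrank 𝔽 V := by
  have hspan : Module.finrank 𝔽 (Submodule.span 𝔽 (v '' K)) = K.card := by
    rw [Set.image_eq_range]
    simpa using finrank_span_eq_card hK
  rw [← hspan, Submodule.finrank_quotient_add_finrank]

variable [Fintype J]

lemma exists_linearIndependent_update [DecidableEq J] (hJ : Fintype.card J = Module.finrank 𝔽 V)
    (hf : LinearIndependent 𝔽 (v ∘ f)) (hg : LinearIndependent 𝔽 (v ∘ g)) {i : J}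
    (hi : f i ∉ Set.range g) :
    ∃ j, g j ∉ Set.range f ∧ LinearIndependent 𝔽 (v ∘ Function.update g j (f i)) := by
  by_contra! hdep
  have : Nonempty J := ⟨i⟩
  let b := basisOfLinearIndependentOfCardEqFinrank hg hJ
  have hb : ⇑b = v ∘ g := coe_basisOfLinearIndependentOfCardEqFinrank hg hJ
  have hspan : v (f i) ∈ Submodule.span 𝔽 (b '' {j | g j ∈ Set.range f}) := by
    refine b.mem_span_image.2 fun j hj ↦ ?_
    by_contra hgj
    refine hdep j hgj ?_
    rw [Function.comp_update]
    refine linearIndependent_update_of_notMem_span hg fun hmem ↦ ?_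
    rw [← hb, b.mem_span_image] at hmem
    exact hmem hj rfl
  refine hf.notMem_span_image (s := {i}ᶜ) (x := i) (by simp) (Submodule.span_mono ?_ hspan)
  rintro _ ⟨j, ⟨l, hl⟩, rfl⟩
  exact ⟨l, fun hli ↦ hi ⟨j, by rw [← hl, hli]⟩, by simp [hb, hl]⟩

lemma exists_linearIndependent_comp [Finite ι] (hv : Submodule.span 𝔽 (Set.range v) = ⊤)
    (hJ : Fintype.card J = Module.finrank 𝔽 V) : ∃ f : J → ι, LinearIndependent 𝔽 (v ∘ f) := by
  obtain ⟨κ, a, ha, hspan, hind⟩ := exists_linearIndependent' 𝔽 v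
  have : Fintype κ := @Fintype.ofFinite κ (Finite.of_injective a ha)
  have hκ : Fintype.card J = Fintype.card κ := by
    rw [hJ, ← finrank_span_eq_card hind, hspan, hv, finrank_top]
  let e := Fintype.equivOfCardEq hκ
  exact ⟨a ∘ e, hind.comp e e.injective⟩

variable [LinearOrder J] [LinearOrder ι] {R : Type*} [Ring R] [LinearOrder R]
  [IsStrictOrderedRing R] {c : ι → R} {w : J → R}

lemma strictAnti_of_isMinOn_assignmentCost (hc : StrictMono c) (hw : StrictMono w)
    (hf : LinearIndependent 𝔽 (v ∘ f))
    (hmin : IsMinOn (assignmentCost c w) {h | LinearIndependent 𝔽 (v ∘ h)} f) :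
    StrictAnti f := by
  intro i j hij
  have hne : f j ≠ f i := fun h ↦ hij.ne' (hf.injective.of_comp h)
  refine hne.lt_of_le (le_of_not_gt fun hlt ↦ ?_)
  exact (isMinOn_iff.1 hmin (f ∘ Equiv.swap i j) (hf.comp _ (Equiv.swap i j).injective)).not_gt
    (assignmentCost_comp_swap_lt (hw hij) (hc hlt))

lemma range_eq_of_isMinOn_assignmentCost (hJ : Fintype.card J = Module.finrank 𝔽 V)
    (hc : StrictMono c) (hw : ∀ j, 0 < w j)
    (hf : LinearIndependent 𝔽 (v ∘ f)) (hg : LinearIndependent 𝔽 (v ∘ g))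
    (hfmin : IsMinOn (assignmentCost c w) {h | LinearIndependent 𝔽 (v ∘ h)} f)
    (hgmin : IsMinOn (assignmentCost c w) {h | LinearIndependent 𝔽 (v ∘ h)} g) :
    Set.range f = Set.range g := by
  by_contra hne
  obtain ⟨x, hx, hxmin⟩ := Set.exists_min_image (symmDiff (Set.range f) (Set.range g)) id
    ((Set.finite_range f).symmDiff (Set.finite_range g)) (Set.symmDiff_nonempty.2 hne)
  wlog hxf : x ∈ Set.range f ∧ x ∉ Set.range g generalizing f g
  · rw [symmDiff_comm] at hx hxmin
    exact this hg hf hgmin hfmin (Ne.symm hne) hx hxmin (hx.resolve_right hxf)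
  obtain ⟨⟨i, rfl⟩, hi⟩ := hxf
  obtain ⟨j, hj, hind⟩ := exists_linearIndependent_update hJ hf hg hi
  have hlt : f i < g j :=
    (hxmin (g j) (Or.inr ⟨⟨j, rfl⟩, hj⟩)).lt_of_ne fun h ↦ hi ⟨j, h.symm⟩
  exact (isMinOn_iff.1 hgmin _ hind).not_gt (assignmentCost_update_lt (hw j) (hc hlt))

theorem exists_unique_min_assignmentCost [Finite ι] (hv : Submodule.span 𝔽 (Set.range v) = ⊤)
    (hJ : Fintype.card J = Module.finrank 𝔽 V) (hc : StrictMono c) (hw : StrictMono w)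
    (hw₀ : ∀ j, 0 < w j) :
    ∃ f : J → ι, LinearIndependent 𝔽 (v ∘ f) ∧ ∀ g : J → ι, LinearIndependent 𝔽 (v ∘ g) →
      g ≠ f → assignmentCost c w f < assignmentCost c w g := by
  obtain ⟨f, hf, hfmin⟩ := Set.exists_min_image {h : J → ι | LinearIndependent 𝔽 (v ∘ h)}
    (assignmentCost c w) (Set.toFinite _) (exists_linearIndependent_comp hv hJ)
  refine ⟨f, hf, fun g hg hne ↦ (hfmin g hg).lt_of_ne fun heq ↦ hne ?_⟩
  have hgmin : IsMinOn (assignmentCost c w) {h | LinearIndependent 𝔽 (v ∘ h)} g :=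
    isMinOn_iff.2 fun h hh ↦ heq ▸ hfmin h hh
  have hganti : StrictAnti g := strictAnti_of_isMinOn_assignmentCost hc hw hg hgmin
  have hfanti : StrictAnti f :=
    strictAnti_of_isMinOn_assignmentCost hc hw hf (isMinOn_iff.2 hfmin)
  exact (hganti.range_inj hfanti).1
    (range_eq_of_isMinOn_assignmentCost hJ hc hw₀ hg hf hgmin (isMinOn_iff.2 hfmin))

end MinimumCostBasis

section Transversal

variable {m d : ℕ}

/-- The cells `(f j, j)` of the `m × d` grid, one in each column, encoded like the columns of
`Cmat` and `Dmat`: `Fin.divNat` is the row and `Fin.modNat` the column of a cell. -/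
def transversal (f : Fin d → Fin m) : Finset (Fin (m * d)) :=
  Finset.univ.image fun j ↦ finProdFinEquiv (f j, j)

/-- The weight `i * j` of the `1`-indexed cell `(i, j)` of the `m × d` grid. -/
def cellWeight (m d : ℕ) (a : Fin (m * d)) : ℤ := ((a.divNat : ℕ) + 1) * ((a.modNat : ℕ) + 1)

lemma divNat_finProdFinEquiv (x : Fin m × Fin d) : (finProdFinEquiv x).divNat = x.1 :=
  congrArg Prod.fst (finProdFinEquiv.symm_apply_apply x)

lemma modNat_finProdFinEquiv (x : Fin m × Fin d) : (finProdFinEquiv x).modNat = x.2 :=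
  congrArg Prod.snd (finProdFinEquiv.symm_apply_apply x)

lemma finProdFinEquiv_graph_injective (f : Fin d → Fin m) :
    Function.Injective fun j ↦ finProdFinEquiv (f j, j) :=
  fun _ _ h ↦ congrArg Prod.snd (finProdFinEquiv.injective h)

lemma coe_transversal (f : Fin d → Fin m) :
    (transversal f : Set (Fin (m * d))) = Set.range fun j ↦ finProdFinEquiv (f j, j) := by
  simp [transversal]

lemma card_transversal (f : Fin d → Fin m) : (transversal f).card = d := by
  simp [transversal, Finset.card_image_of_injective _ (finProdFinEquiv_graph_injective f)]

lemma injOn_modNat_transversal (f : Fin d → Fin m) :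
    Set.InjOn Fin.modNat (transversal f : Set (Fin (m * d))) := by
  rw [coe_transversal]
  rintro _ ⟨i, rfl⟩ _ ⟨j, rfl⟩ hij
  simp only [modNat_finProdFinEquiv] at hij
  rw [hij]

lemma exists_eq_transversal {A : Finset (Fin (m * d))}
    (hinj : Set.InjOn Fin.modNat (A : Set (Fin (m * d)))) (hcard : A.card = d) :
    ∃ f : Fin d → Fin m, A = transversal f := by
  have himage : A.image Fin.modNat = Finset.univ :=
    Finset.eq_univ_of_card _ (by rw [Finset.card_image_of_injOn hinj, hcard, Fintype.card_fin])
  have hcol (j : Fin d) : ∃ a ∈ A, a.modNat = j := by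
    simpa [himage] using Finset.mem_image (s := A) (f := Fin.modNat) (b := j)
  choose a haA ha using hcol
  refine ⟨fun j ↦ (a j).divNat, (Finset.eq_of_subset_of_card_le (fun x hx ↦ ?_) ?_).symm⟩
  · rw [← Finset.mem_coe, coe_transversal] at hx
    obtain ⟨j, rfl⟩ := hx
    have hcell : (finProdFinEquiv ((a j).divNat, j) : Fin (m * d)) = a j :=
      (Equiv.eq_symm_apply _).1 (Prod.ext rfl (ha j).symm)
    simpa only [hcell] using haA j
  · rw [hcard, card_transversal]

lemma wsum_cellWeight_transversal (f : Fin d → Fin m) :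
    wsum (cellWeight m d) (transversal f) =
      assignmentCost (fun i : Fin m ↦ ((i : ℕ) + 1 : ℤ)) (fun j : Fin d ↦ ((j : ℕ) + 1 : ℤ)) f := by
  rw [wsum, transversal, Finset.sum_image (finProdFinEquiv_graph_injective f).injOn]
  simp only [cellWeight, divNat_finProdFinEquiv, modNat_finProdFinEquiv, assignmentCost]

lemma wsum_cellWeight_nonneg (A : Finset (Fin (m * d))) : 0 ≤ wsum (cellWeight m d) A :=
  Finset.sum_nonneg fun a _ ↦ by unfold cellWeight; positivity

lemma wsum_cellWeight_le (A : Finset (Fin (m * d))) :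
    wsum (cellWeight m d) A ≤ A.card * (m * d) := by
  have hcell (a : Fin (m * d)) : cellWeight m d a ≤ m * d := by
    have hrow : ((a.divNat : ℕ) + 1 : ℤ) ≤ m := by exact_mod_cast a.divNat.is_lt
    have hcol : ((a.modNat : ℕ) + 1 : ℤ) ≤ d := by exact_mod_cast a.modNat.is_lt
    exact mul_le_mul hrow hcol (by positivity) (by positivity)
  simpa [wsum] using Finset.sum_le_card_nsmul A _ _ fun a _ ↦ hcell a

end Transversal

lemma add_lt_add_of_ne_imp_lt {α β R : Type*} [AddCommMonoid R] [PartialOrder R]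
    [IsOrderedCancelAddMonoid R] {F : α → R} {G : β → R} {a a' : α} {b b' : β}
    (hF : a' ≠ a → F a < F a') (hG : b' ≠ b → G b < G b') (hne : (a', b') ≠ (a, b)) :
    F a + G b < F a' + G b' := by
  obtain rfl | ha := eq_or_ne a' a
  · exact add_lt_add_right (hG fun hb ↦ hne (by rw [hb])) _
  · obtain rfl | hb := eq_or_ne b' b
    · exact add_lt_add_left (hF ha) _
    · exact add_lt_add (hF ha) (hG hb)

section Matrix

variable {𝔽 : Type*} [Field 𝔽]

lemma linearIndepOn_comp_iff_image {R M κ ι : Type*} [Semiring R] [AddCommMonoid M] [Module R M]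
    {v : ι → M} {f : κ → ι} {s : Set κ} (hf : Set.InjOn f s) :
    LinearIndepOn R (v ∘ f) s ↔ LinearIndepOn R v (f '' s) :=
  ⟨fun h ↦ h.image_of_comp f v, fun h ↦ h.comp_of_image hf⟩

lemma linearIndepOn_col_submatrix_iff_image {R ρ ι κ : Type*} [Semiring R] (A : Matrix ρ ι R)
    (e : κ ≃ ι) (s : Set κ) :
    LinearIndepOn R (A.submatrix id e).col s ↔ LinearIndepOn R A.col (e '' s) :=
  linearIndepOn_equiv e (f := A.col)

lemma linearIndepOn_col_fromBlocks_zero {R ρ₁ ρ₂ ι₁ ι₂ : Type*} [Ring R] (A : Matrix ρ₁ ι₁ R)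
    (D : Matrix ρ₂ ι₂ R) (s : Finset ι₁) (t : Finset ι₂) :
    LinearIndepOn R (Matrix.fromBlocks A 0 0 D).col (s.disjSum t : Finset (ι₁ ⊕ ι₂)) ↔
      LinearIndepOn R A.col s ∧ LinearIndepOn R D.col t := by
  simp only [linearIndepOn_finset_iff, Finset.sum_disjSum, funext_iff, Pi.add_apply,
    Finset.sum_apply, Pi.smul_apply, Sum.forall, Matrix.col_apply, Matrix.fromBlocks_apply₁₁,
    Matrix.fromBlocks_apply₁₂, Matrix.fromBlocks_apply₂₁, Matrix.fromBlocks_apply₂₂,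
    Matrix.zero_apply, smul_zero, Finset.sum_const_zero, add_zero, zero_add, Pi.zero_apply,
    Finset.inl_mem_disjSum, Finset.inr_mem_disjSum]
  refine ⟨fun h ↦ ⟨fun a ha ↦ ?_, fun b hb ↦ ?_⟩, fun h a ha ↦ ⟨h.1 _ ha.1, h.2 _ ha.2⟩⟩
  · simpa using (h (Sum.elim a 0) ⟨by simpa using ha, by simp⟩).1
  · simpa using (h (Sum.elim 0 b) ⟨by simp, by simpa using hb⟩).2

/-- The standard basis of `𝔽^ρ` modulo the span of the columns of `L` indexed by `K`: a set of
standard basis vectors is independent relative to these columns iff it is independent here. -/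
def stdBasisMod {ρ ι : Type*} [DecidableEq ρ] (L : Matrix ρ ι 𝔽) (K : Set ι) (i : ρ) :
    (ρ → 𝔽) ⧸ Submodule.span 𝔽 (L.col '' K) :=
  Submodule.mkQ _ (Pi.single i 1)

lemma span_range_stdBasisMod {ρ ι : Type*} [Finite ρ] [DecidableEq ρ] (L : Matrix ρ ι 𝔽)
    (K : Set ι) : Submodule.span 𝔽 (Set.range (stdBasisMod L K)) = ⊤ := by
  have hsingle : Submodule.span 𝔽 (Set.range fun i : ρ ↦ (Pi.single i 1 : ρ → 𝔽)) = ⊤ := by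
    simpa [funext (Pi.basisFun_apply 𝔽 ρ)] using (Pi.basisFun 𝔽 ρ).span_eq
  change Submodule.span 𝔽 (Set.range (Submodule.mkQ _ ∘ fun i : ρ ↦ Pi.single i 1)) = ⊤
  rw [Set.range_comp, Submodule.span_image, hsingle, Submodule.map_top, Submodule.range_mkQ]

variable {m n k : ℕ}

lemma L1aug_eq_fromBlocks (L : Matrix (Fin m) (Fin n) 𝔽) :
    L1aug 𝔽 m n k L =
      (Matrix.fromBlocks (Matrix.fromCols L (Cmat 𝔽 m k)) 0 0 (Dmat 𝔽 m k)).submatrix id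
        (Equiv.sumAssoc _ _ _).symm := by
  ext (p | p) (e | a | b) <;> rfl

lemma L2aug_eq_submatrix_L1aug (L : Matrix (Fin m) (Fin n) 𝔽) :
    L2aug 𝔽 m n k L = (L1aug 𝔽 m n k L).submatrix id
      ((Equiv.refl _).sumCongr (Equiv.sumComm _ _)) := by
  ext (p | p) (e | a | b) <;> rfl

lemma col_Cmat (a : Fin (m * (m - k))) : (Cmat 𝔽 m k).col a = Pi.single a.divNat 1 := by
  ext p
  simp [Cmat, Pi.single_apply, Fin.ext_iff]

lemma col_Dmat (a : Fin (m * (m - k))) : (Dmat 𝔽 m k).col a = Pi.single a.modNat 1 := by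
  ext p
  simp [Dmat, Pi.single_apply, Fin.ext_iff]

lemma linearIndepOn_col_Dmat_iff {A : Set (Fin (m * (m - k)))} :
    LinearIndepOn 𝔽 (Dmat 𝔽 m k).col A ↔ Set.InjOn Fin.modNat A := by
  have hD : (Dmat 𝔽 m k).col = (fun j ↦ Pi.single j 1) ∘ Fin.modNat := funext col_Dmat
  refine ⟨fun h a ha b hb hab ↦ h.injOn ha hb (by simp [hD, hab]), fun h ↦ ?_⟩
  rw [hD, linearIndepOn_comp_iff_image h]
  exact (Pi.linearIndependent_single_one (Fin (m - k)) 𝔽).linearIndepOn _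

/-- A set `A` of grid cells completes a set `K` of columns of `L` if the columns of `[L, C]`
indexed by `K` and `A` are independent and so are the columns of `D` indexed by `A`. -/
def IsCompletion (L : Matrix (Fin m) (Fin n) 𝔽) (K : Finset (Fin n))
    (A : Finset (Fin (m * (m - k)))) : Prop :=
  LinearIndepOn 𝔽 (Matrix.fromCols L (Cmat 𝔽 m k)).col (K.disjSum A : Finset (Fin n ⊕ _)) ∧
    LinearIndepOn 𝔽 (Dmat 𝔽 m k).col A

variable {L L₁ L₂ : Matrix (Fin m) (Fin n) 𝔽} {K : Finset (Fin n)}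
  {A B : Finset (Fin (m * (m - k)))}

lemma linearIndepOn_col_L1aug_iff :
    LinearIndepOn 𝔽 (L1aug 𝔽 m n k L).col (K.disjSum (A.disjSum B) : Finset (Fin n ⊕ (_ ⊕ _))) ↔
      LinearIndepOn 𝔽 (Matrix.fromCols L (Cmat 𝔽 m k)).col (K.disjSum A : Finset (Fin n ⊕ _)) ∧
        LinearIndepOn 𝔽 (Dmat 𝔽 m k).col B := by
  rw [← linearIndepOn_col_fromBlocks_zero, L1aug_eq_fromBlocks,
    linearIndepOn_col_submatrix_iff_image]
  congr!
  ext ((e | a) | b) <;> simp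

lemma linearIndepOn_col_L2aug_iff :
    LinearIndepOn 𝔽 (L2aug 𝔽 m n k L).col (K.disjSum (A.disjSum B) : Finset (Fin n ⊕ (_ ⊕ _))) ↔
      LinearIndepOn 𝔽 (Matrix.fromCols L (Cmat 𝔽 m k)).col (K.disjSum B : Finset (Fin n ⊕ _)) ∧
        LinearIndepOn 𝔽 (Dmat 𝔽 m k).col A := by
  rw [← linearIndepOn_col_L1aug_iff, L2aug_eq_submatrix_L1aug,
    linearIndepOn_col_submatrix_iff_image]
  congr!
  ext (e | b | a) <;> simp

lemma doublyIndep_augmented_iff :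
    DoublyIndep 𝔽 (L1aug 𝔽 m n k L₁) (L2aug 𝔽 m n k L₂) (K.disjSum (A.disjSum B)) ↔
      IsCompletion L₁ K A ∧ IsCompletion L₂ K B := by
  have hsplit := (linearIndepOn_col_L1aug_iff (L := L₁) (K := K) (A := A) (B := B)).and
    (linearIndepOn_col_L2aug_iff (L := L₂) (K := K) (A := A) (B := B))
  exact hsplit.trans (by unfold IsCompletion; tauto)

lemma isCompletion_iff :
    IsCompletion L K A ↔ LinearIndepOn 𝔽 L.col K ∧
      LinearIndepOn 𝔽 (stdBasisMod L K ∘ Fin.divNat) (A : Set (Fin (m * (m - k)))) ∧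
        Set.InjOn Fin.modNat (A : Set (Fin (m * (m - k)))) := by
  have hL : L.col = (Matrix.fromCols L (Cmat 𝔽 m k)).col ∘ Sum.inl := rfl
  have himage : L.col '' K = (Matrix.fromCols L (Cmat 𝔽 m k)).col '' (Sum.inl '' (K : Set _)) := by
    rw [hL, Set.image_comp]
  have hC : stdBasisMod L K ∘ Fin.divNat =
      (Submodule.span 𝔽 (L.col '' K)).mkQ ∘ (Matrix.fromCols L (Cmat 𝔽 m k)).col ∘ Sum.inr := by
    funext a
    exact congrArg (Submodule.mkQ _) (col_Cmat a).symm
  have hunion : ((K.disjSum A : Finset (Fin n ⊕ _)) : Set (Fin n ⊕ _)) =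
      Sum.inl '' (K : Set (Fin n)) ∪ Sum.inr '' (A : Set (Fin (m * (m - k)))) := by
    ext (e | a) <;> simp
  rw [IsCompletion, linearIndepOn_col_Dmat_iff, hunion,
    linearIndepOn_union_iff_quotient Set.disjoint_image_inl_image_inr,
    ← linearIndepOn_comp_iff_image Sum.inl_injective.injOn,
    ← linearIndepOn_comp_iff_image Sum.inr_injective.injOn, hC, himage, and_assoc]
  rfl

lemma IsCompletion.linearIndepOn_col (h : IsCompletion L K A) : LinearIndepOn 𝔽 L.col K :=
  (isCompletion_iff.1 h).1

lemma IsCompletion.card_add_card_le (h : IsCompletion L K A) : K.card + A.card ≤ m := by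
  simpa using LinearIndependent.fintype_card_le_finrank h.1

lemma IsCompletion.card_le (h : IsCompletion L K A) : A.card ≤ m - k := by
  simpa using LinearIndependent.fintype_card_le_finrank h.2

lemma isCompletion_transversal_iff {f : Fin (m - k) → Fin m} (hK : LinearIndepOn 𝔽 L.col K) :
    IsCompletion L K (transversal f) ↔ LinearIndependent 𝔽 (stdBasisMod L K ∘ f) := by
  rw [isCompletion_iff, and_iff_right hK, and_iff_left (injOn_modNat_transversal f),
    coe_transversal, linearIndepOn_range_iff (finProdFinEquiv_graph_injective f)]
  simp [Function.comp_def, divNat_finProdFinEquiv]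

lemma exists_completions_of_doublyIndep (hk : k ≤ m)
    {J : Finset (Fin n ⊕ (Fin (m * (m - k)) ⊕ Fin (m * (m - k))))}
    (hJ : DoublyIndep 𝔽 (L1aug 𝔽 m n k L₁) (L2aug 𝔽 m n k L₂) J) (hcard : J.card = 2 * m - k) :
    ∃ K A B, J = K.disjSum (A.disjSum B) ∧ K.card = k ∧
      (IsCompletion L₁ K A ∧ A.card = m - k) ∧ (IsCompletion L₂ K B ∧ B.card = m - k) := by
  obtain ⟨K, A, B, rfl⟩ : ∃ K A B, J = K.disjSum (A.disjSum B) :=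
    ⟨J.toLeft, J.toRight.toLeft, J.toRight.toRight, by simp [Finset.toLeft_disjSum_toRight]⟩
  obtain ⟨hA, hB⟩ := doublyIndep_augmented_iff.1 hJ
  simp only [Finset.card_disjSum] at hcard
  have hKA := hA.card_add_card_le
  have hKB := hB.card_add_card_le
  have hA_le := hA.card_le
  have hB_le := hB.card_le
  exact ⟨K, A, B, rfl, by omega, ⟨hA, by omega⟩, ⟨hB, by omega⟩⟩

theorem exists_unique_min_completion (hK : LinearIndepOn 𝔽 L.col K) (hcard : K.card = k) :
    ∃ A : Finset (Fin (m * (m - k))), IsCompletion L K A ∧ A.card = m - k ∧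
      ∀ B, IsCompletion L K B → B.card = m - k → B ≠ A →
        wsum (cellWeight m (m - k)) A < wsum (cellWeight m (m - k)) B := by
  have hrank := finrank_quotient_span_image_add_card hK
  rw [Module.finrank_fin_fun] at hrank
  obtain ⟨f, hf, hmin⟩ := exists_unique_min_assignmentCost (J := Fin (m - k))
    (c := fun i : Fin m ↦ ((i : ℕ) + 1 : ℤ)) (w := fun j ↦ ((j : ℕ) + 1 : ℤ))
    (span_range_stdBasisMod L K) (by rw [Fintype.card_fin]; omega)
    (fun _ _ h ↦ by simpa using h) (fun _ _ h ↦ by simpa using h) (fun _ ↦ by positivity)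
  refine ⟨transversal f, (isCompletion_transversal_iff hK).2 hf, card_transversal f,
    fun B hB hBcard hne ↦ ?_⟩
  obtain ⟨g, rfl⟩ := exists_eq_transversal (isCompletion_iff.1 hB).2.2 hBcard
  rw [wsum_cellWeight_transversal, wsum_cellWeight_transversal]
  exact hmin g ((isCompletion_transversal_iff hK).1 hB) fun h ↦ hne (congrArg transversal h)

lemma wsum_Waug (W : Fin n → ℤ) :
    wsum (Waug m n k W) (K.disjSum (A.disjSum B)) = 10 * (m : ℤ) ^ 4 * wsum W K +
      (wsum (cellWeight m (m - k)) A + wsum (cellWeight m (m - k)) B) := by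
  simp [wsum, Finset.sum_disjSum, Waug, Finset.mul_sum, cellWeight]

-- The cells weigh at most `2 * m ^ 4` in total, less than one unit of `W`, scaled to `10 * m ^ 4`.
lemma wsum_Waug_lt_of_wsum_lt {W : Fin n → ℤ} {K' : Finset (Fin n)}
    {A' B' : Finset (Fin (m * (m - k)))} (hm : 0 < m) (hA : A.card = m - k) (hB : B.card = m - k)
    (hlt : wsum W K < wsum W K') :
    wsum (Waug m n k W) (K.disjSum (A.disjSum B)) <
      wsum (Waug m n k W) (K'.disjSum (A'.disjSum B')) := by
  have hcell {E : Finset (Fin (m * (m - k)))} (hE : E.card = m - k) :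
      wsum (cellWeight m (m - k)) E ≤ (m : ℤ) ^ 4 := by
    have hle := wsum_cellWeight_le E
    rw [hE] at hle
    calc wsum (cellWeight m (m - k)) E
        ≤ ((m - k : ℕ) : ℤ) * (m * (m - k : ℕ)) := hle
      _ ≤ (m : ℤ) * (m * m) := by gcongr <;> omega
      _ = (m : ℤ) ^ 3 := by ring
      _ ≤ (m : ℤ) ^ 4 := pow_le_pow_right₀ (by omega) (by omega)
  have hscaled : 10 * (m : ℤ) ^ 4 * (wsum W K + 1) ≤ 10 * (m : ℤ) ^ 4 * wsum W K' :=
    mul_le_mul_of_nonneg_left hlt (by positivity)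
  have hpos : 0 < (m : ℤ) ^ 4 := by positivity
  rw [wsum_Waug, wsum_Waug]
  linarith [hcell hA, hcell hB, wsum_cellWeight_nonneg A', wsum_cellWeight_nonneg B']

end Matrix

/-- If there is a unique minimum-`W`-weight set `I_k` among the size-`k` doubly independent
subsets of `S` for `(L₁,L₂)`, then there is a unique minimum-`W′`-weight set `I` among the
doubly independent subsets of `S ⊕ (A ⊕ B)` of cardinality `2m − k` for `(L₁′,L₂′)`, and it
satisfies `I ∩ S = I_k`. -/
theorem unique_min_perfect_extension (𝔽 : Type*) [Field 𝔽] (m n k : ℕ) (hk : k ≤ m)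
    (L₁ L₂ : Matrix (Fin m) (Fin n) 𝔽) (W : Fin n → ℤ) (Ik : Finset (Fin n))
    (hIk : DoublyIndep 𝔽 L₁ L₂ Ik ∧ Ik.card = k ∧
      ∀ J : Finset (Fin n), DoublyIndep 𝔽 L₁ L₂ J → J.card = k → J ≠ Ik →
        wsum W Ik < wsum W J) :
    ∃ I : Finset (Fin n ⊕ (Fin (m * (m - k)) ⊕ Fin (m * (m - k)))),
      (DoublyIndep 𝔽 (L1aug 𝔽 m n k L₁) (L2aug 𝔽 m n k L₂) I ∧ I.card = 2 * m - k ∧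
        ∀ J, DoublyIndep 𝔽 (L1aug 𝔽 m n k L₁) (L2aug 𝔽 m n k L₂) J → J.card = 2 * m - k →
          J ≠ I → wsum (Waug m n k W) I < wsum (Waug m n k W) J) ∧
      ∀ e : Fin n, Sum.inl e ∈ I ↔ e ∈ Ik := by
  obtain ⟨⟨hI₁, hI₂⟩, hIcard, hImin⟩ := hIk
  obtain ⟨A, hA, hAcard, hAmin⟩ := exists_unique_min_completion hI₁ hIcard
  obtain ⟨B, hB, hBcard, hBmin⟩ := exists_unique_min_completion hI₂ hIcard
  refine ⟨Ik.disjSum (A.disjSum B), ⟨doublyIndep_augmented_iff.2 ⟨hA, hB⟩, ?_, ?_⟩, by simp⟩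
  · simp only [Finset.card_disjSum]
    omega
  intro J hJ hJcard hne
  obtain ⟨K, A', B', rfl, hKcard, ⟨hA', hA'card⟩, hB', hB'card⟩ :=
    exists_completions_of_doublyIndep hk hJ hJcard
  obtain rfl | hK := eq_or_ne K Ik
  · have hne' : (A', B') ≠ (A, B) := by
      rintro ⟨⟩
      exact hne rfl
    rw [wsum_Waug, wsum_Waug, add_lt_add_iff_left]
    exact add_lt_add_of_ne_imp_lt (hAmin A' hA' hA'card) (hBmin B' hB' hB'card) hne'
  · have hm : 0 < m := by
      refine Nat.pos_of_ne_zero fun hm ↦ hK ?_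
      rw [Finset.card_eq_zero.1 (by omega : K.card = 0),
        Finset.card_eq_zero.1 (by omega : Ik.card = 0)]
    exact wsum_Waug_lt_of_wsum_lt hm hAcard hBcard
      (hImin K ⟨hA'.linearIndepOn_col, hB'.linearIndepOn_col⟩ hKcard hK)
end
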